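/- arXiv:2505.12270 — 2 statements merged into one kernel-verified Lean document; each statement's English description precedes it below -/
import Mathlib

section
/- Let t be a positive integer with 5 ∤ t. Then for every nonnegative integer n, b^2_{5,4t}(4n+3) ≡ 0 (mod 10). -/
/-- `coloredRegular k l m n` is the number of `k`-colored partitions of `n` into parts
divisible by neither `l` nor `m`, i.e. the coefficient of `q^n` in
`∏_{j ≥ 1, l ∤ j, m ∤ j} (1 - q^j)^{-k}`.  A `k`-colored partition is a multiset of
(part, color) pairs, where parts are positive integers not divisible by `l` or `m`
and colors range over `{0, …, k-1}`. -/
noncomputable def coloredRegular (k l m n : ℕ) : ℕ :=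
  Nat.card {M : Multiset (ℕ × ℕ) //
    (∀ x ∈ M, ¬ l ∣ x.1 ∧ ¬ m ∣ x.1 ∧ x.2 < k) ∧ (M.map Prod.fst).sum = n}

/-!
Write `f_k = ∏ (1 - q ^ (k * i))`. The generating series of `coloredRegular 2 l m` is `R ^ 2` with
`R = f_l * f_m / (f_1 * f_{lcm l m})`. A square has vanishing odd coefficients modulo `2`.
Modulo `5`, `f_5 = f_1 ^ 5` turns `R ^ 2` for `l = 5` and `4 ∣ m` into `f_1 ^ 8` times a series in
`q ^ 4`, so it suffices that `f_1 ^ 8` has no exponent `3` modulo `4`, which holds over any ring.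

To see this, let `a` and `b` be the even and odd parts of `θ = ∑ q ^ (k ^ 2)`, supported on
exponents `0` and `1` modulo `4`. Gauss's identity reads `f_1 ^ 2 = f_2 * (a - b)`, and
`a ^ 2 + b ^ 2 = θ(q ^ 2) ^ 2`. Hence `f_1 ^ 8 = f_2 ^ 4 * (θ(q ^ 2) ^ 2 - 2 * a * b) ^ 2` is a
series in `q ^ 2` minus `4 * a * b` times `(f_1 ^ 4 * θ ^ 2)(q ^ 2)`; the latter factor is a series
in `q ^ 4` because `f_1 ^ 4 * θ ^ 2 = f_2 ^ 2 * (a ^ 2 - b ^ 2) ^ 2`.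
-/

open PowerSeries PowerSeries.WithPiTopology Finset Filter Topology

section ResidueSupported

variable {R : Type*} [CommSemiring R] {m r s : ℕ} {F G : R⟦X⟧}

variable (R m r) in
/-- The power series all of whose exponents lie in the residue class of `r` modulo `m`. -/
def residueSupported : Submodule R R⟦X⟧ where
  carrier := {F | ∀ n, coeff n F ≠ 0 → n ≡ r [MOD m]}
  zero_mem' := by simp
  add_mem' {F G} hF hG n h := by
    by_cases hFn : coeff n F = 0
    · exact hG n fun hGn => h (by rw [map_add, hFn, hGn, add_zero])
    · exact hF n hFn
  smul_mem' c F hF n h := hF n fun hFn => h (by rw [coeff_smul, hFn, smul_zero])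

lemma coeff_eq_zero_of_mem_residueSupported (hF : F ∈ residueSupported R m r) {n : ℕ}
    (hn : ¬ n ≡ r [MOD m]) : coeff n F = 0 :=
  not_not.1 fun h => hn (hF n h)

lemma residueSupported_le {k : ℕ} (hkm : k ∣ m) (hrs : r ≡ s [MOD k]) :
    residueSupported R m r ≤ residueSupported R k s :=
  fun _ hF n hn => ((hF n hn).of_dvd hkm).trans hrs

lemma mul_mem_residueSupported (hF : F ∈ residueSupported R m r)
    (hG : G ∈ residueSupported R m s) : F * G ∈ residueSupported R m (r + s) := by
  intro n hn
  rw [coeff_mul] at hn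
  obtain ⟨⟨i, j⟩, hij, hne⟩ := exists_ne_zero_of_sum_ne_zero hn
  rw [← mem_antidiagonal.1 hij]
  exact (hF i (left_ne_zero_of_mul hne)).add (hG j (right_ne_zero_of_mul hne))

lemma coeff_mul_eq_zero_of_mem_residueSupported
    (hF : ∀ n, n ≡ r [MOD m] → coeff n F = 0) (hG : G ∈ residueSupported R m 0)
    {n : ℕ} (hn : n ≡ r [MOD m]) : coeff n (F * G) = 0 := by
  rw [coeff_mul]
  refine sum_eq_zero fun ⟨i, j⟩ hij => ?_
  by_cases hj : coeff j G = 0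
  · rw [hj, mul_zero]
  · have hi : i ≡ i + j [MOD m] := by simpa only [add_zero] using (hG j hj).symm.add_left i
    rw [hF i (hi.trans (mem_antidiagonal.1 hij ▸ hn)), zero_mul]

variable {S : Type*} [CommRing S]

lemma expand_mem_residueSupported {F : S⟦X⟧} {k : ℕ} (hk : k ≠ 0)
    (hF : F ∈ residueSupported S m r) :
    expand k hk F ∈ residueSupported S (k * m) (k * r) := by
  intro n hn
  rw [coeff_expand] at hn
  split_ifs at hn with hkn
  · obtain ⟨j, rfl⟩ := hkn
    rw [Nat.mul_div_cancel_left _ (Nat.pos_of_ne_zero hk)] at hn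
    exact (hF j hn).mul_left' k
  · exact absurd rfl hn

lemma expand_mem_residueSupported_zero (hm : m ≠ 0) (F : S⟦X⟧) :
    expand m hm F ∈ residueSupported S m 0 := by
  simpa only [mul_one, mul_zero] using
    expand_mem_residueSupported (m := 1) (r := 0) hm (F := F) fun _ _ => Nat.modEq_one

end ResidueSupported

lemma pow_prime_eq_expand (p : ℕ) [hp : Fact p.Prime] (F : (ZMod p)⟦X⟧) :
    F ^ p = expand p hp.out.ne_zero F := by
  have h := MvPowerSeries.map_frobenius_expand p hp.out.ne_zero (f := F)
  rw [ZMod.frobenius_zmod] at h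
  exact h.symm

section WeightSeries

variable {ι κ : Type*}

/-- The generating series `∑ i, X ^ w i` of a weight `w` with finite fibers, encoded by the
cardinalities of these fibers. -/
noncomputable def weightSeries (R : Type*) [Semiring R] (w : ι → ℕ) : R⟦X⟧ :=
  PowerSeries.mk fun n => (Nat.card {i // w i = n} : R)

/-- A pair of total weight `n` is a splitting of `n` and an element of each of the two
corresponding fibers. -/
def addFiberEquiv (w : ι → ℕ) (w' : κ → ℕ) (n : ℕ) :
    {p : ι × κ // w p.1 + w' p.2 = n} ≃
      Σ a : antidiagonal n, {i // w i = a.1.1} × {j // w' j = a.1.2} where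
  toFun p := ⟨⟨(w p.1.1, w' p.1.2), mem_antidiagonal.2 p.2⟩, ⟨p.1.1, rfl⟩, ⟨p.1.2, rfl⟩⟩
  invFun x := ⟨(x.2.1.1, x.2.2.1), by
    rw [x.2.1.2, x.2.2.2, mem_antidiagonal.1 x.1.2]⟩
  left_inv _ := rfl
  right_inv := by
    rintro ⟨⟨⟨a, b⟩, h⟩, ⟨i, hi⟩, ⟨j, hj⟩⟩
    dsimp only at hi hj
    subst hi hj
    rfl

variable {w : ι → ℕ} {w' : κ → ℕ}

lemma finite_fiber_comp (hw : ∀ n, Finite {i // w i = n}) {f : κ → ι}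
    (hf : f.Injective) (n : ℕ) : Finite {j // w (f j) = n} :=
  have := hw n
  Finite.of_injective (fun j => (⟨f j, j.2⟩ : {i // w i = n})) fun _ _ h =>
    Subtype.ext (hf (congrArg Subtype.val h))

lemma finite_fiber_add (hw : ∀ n, Finite {i // w i = n}) (hw' : ∀ n, Finite {j // w' j = n})
    (n : ℕ) : Finite {p : ι × κ // w p.1 + w' p.2 = n} :=
  have (a : antidiagonal n) := hw a.1.1
  have (a : antidiagonal n) := hw' a.1.2
  Finite.of_equiv _ (addFiberEquiv w w' n).symm

lemma weightSeries_mem_residueSupported (R : Type*) [CommSemiring R] {m r : ℕ}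
    (hw : ∀ i, w i ≡ r [MOD m]) : weightSeries R w ∈ residueSupported R m r := by
  intro n hn
  rw [weightSeries, coeff_mk] at hn
  have : Nonempty {i // w i = n} := by
    by_contra! hempty
    exact hn (by rw [Nat.card_of_isEmpty, Nat.cast_zero])
  obtain ⟨i, rfl⟩ := this
  exact hw i

lemma weightSeries_mul_left (R : Type*) [CommRing R] {k : ℕ} (hk : k ≠ 0) (w : ι → ℕ) :
    weightSeries R (fun i => k * w i) = expand k hk (weightSeries R w) := by
  ext n
  rw [coeff_expand]
  split_ifs with hkn
  · obtain ⟨j, rfl⟩ := hkn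
    simp only [weightSeries, coeff_mk, Nat.mul_div_cancel_left _ (Nat.pos_of_ne_zero hk),
      Nat.mul_right_inj hk]
  · have : IsEmpty {i // k * w i = n} := ⟨fun i => hkn ⟨_, i.2.symm⟩⟩
    rw [weightSeries, coeff_mk, Nat.card_of_isEmpty, Nat.cast_zero]

variable (R : Type*) [Semiring R]

lemma weightSeries_of_unique [Unique ι] : weightSeries R w = X ^ w default := by
  ext n
  rw [weightSeries, coeff_mk, coeff_X_pow]
  split_ifs with hn
  · have : Unique {i // w i = n} :=
      ⟨⟨⟨default, hn.symm⟩⟩, fun _ => Subtype.ext (Subsingleton.elim _ _)⟩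
    rw [Nat.card_unique, Nat.cast_one]
  · have : IsEmpty {i // w i = n} :=
      ⟨fun i => hn (i.2.symm.trans (congrArg w (Subsingleton.elim _ _)))⟩
    rw [Nat.card_of_isEmpty, Nat.cast_zero]

lemma weightSeries_mul (hw : ∀ n, Finite {i // w i = n}) (hw' : ∀ n, Finite {j // w' j = n}) :
    weightSeries R w * weightSeries R w' = weightSeries R fun p : ι × κ => w p.1 + w' p.2 := by
  ext n
  simp only [weightSeries, coeff_mul, coeff_mk, Nat.card_congr (addFiberEquiv w w' n),
    Nat.card_sigma, Nat.card_prod, Nat.cast_sum, Nat.cast_mul]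
  exact (sum_coe_sort (antidiagonal n) fun a =>
    (Nat.card {i // w i = a.1} : R) * Nat.card {j // w' j = a.2}).symm

lemma weightSeries_sumElim (hw : ∀ n, Finite {i // w i = n})
    (hw' : ∀ n, Finite {j // w' j = n}) :
    weightSeries R (Sum.elim w w') = weightSeries R w + weightSeries R w' := by
  ext n
  simp only [weightSeries, coeff_mk, map_add, ← Nat.cast_add, ← Nat.card_sum]
  exact congrArg _ (Nat.card_congr Equiv.subtypeSum)

lemma weightSeries_comp_equiv (e : κ ≃ ι) : weightSeries R (w ∘ e) = weightSeries R w := by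
  ext n
  simp only [weightSeries, coeff_mk]
  exact congrArg _ (Nat.card_congr (e.subtypeEquiv fun _ => Iff.rfl))

lemma hasSum_weightSeries [TopologicalSpace R] (hw : ∀ n, Finite {i // w i = n}) :
    HasSum (fun i => (X : R⟦X⟧) ^ w i) (weightSeries R w) := by
  rw [hasSum_iff_hasSum_coeff]
  intro n
  have hfin : {i | w i = n}.Finite := hw n
  have hsum : ∑ i ∈ hfin.toFinset, coeff n ((X : R⟦X⟧) ^ w i) = coeff n (weightSeries R w) := by
    rw [sum_congr rfl fun i hi => by
      rw [(hfin.mem_toFinset.1 hi : w i = n), coeff_X_pow_self], sum_const, nsmul_one,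
      ← Set.ncard_eq_toFinset_card _ hfin, weightSeries, coeff_mk]
    rfl
  rw [← hsum]
  refine hasSum_sum_of_ne_finset_zero fun i hi => ?_
  rw [coeff_X_pow, if_neg fun h => hi (hfin.mem_toFinset.2 h.symm)]

end WeightSeries

section Theta

/-- Jacobi's theta series `∑ k : ℤ, X ^ (k ^ 2)`. -/
noncomputable def theta (R : Type*) [Semiring R] : R⟦X⟧ :=
  weightSeries R fun k : ℤ => k.natAbs ^ 2

/-- The even part `∑ k : ℤ, X ^ ((2 * k) ^ 2)` of the theta series. -/
noncomputable def evenTheta (R : Type*) [Semiring R] : R⟦X⟧ :=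
  weightSeries R fun k : ℤ => (2 * k).natAbs ^ 2

/-- The odd part `∑ k : ℤ, X ^ ((2 * k + 1) ^ 2)` of the theta series. -/
noncomputable def oddTheta (R : Type*) [Semiring R] : R⟦X⟧ :=
  weightSeries R fun k : ℤ => (2 * k + 1).natAbs ^ 2

/-- The bijection sending `inl k` to `2 * k` and `inr k` to `2 * k + 1`, which splits sums over `ℤ`
by parity. -/
noncomputable def intEvenOddEquiv : ℤ ⊕ ℤ ≃ ℤ :=
  Equiv.ofBijective (Sum.elim (fun k => 2 * k) fun k => 2 * k + 1) <| by
    constructor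
    · rintro (a | a) (b | b) h <;> simp only [Sum.elim_inl, Sum.elim_inr] at h <;> grind
    · intro k
      obtain ⟨j, rfl | rfl⟩ := Int.even_or_odd' k
      · exact ⟨Sum.inl j, rfl⟩
      · exact ⟨Sum.inr j, rfl⟩

/-- The bijection `(x, y) ↦ ((x + y) / 2, (x - y) / 2)` from the pairs of integers of equal parity
onto all pairs of integers, which halves `x ^ 2 + y ^ 2`; the pairs `(2 * a, 2 * b)` and
`(2 * a + 1, 2 * b + 1)` are encoded as `inl (a, b)` and `inr (a, b)`. -/
noncomputable def sumSqDuplicationEquiv : (ℤ × ℤ) ⊕ (ℤ × ℤ) ≃ ℤ × ℤ :=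
  Equiv.ofBijective
    (Sum.elim (fun p => (p.1 + p.2, p.1 - p.2)) fun p => (p.1 + p.2 + 1, p.1 - p.2)) <| by
    constructor
    · rintro (⟨a, b⟩ | ⟨a, b⟩) (⟨c, d⟩ | ⟨c, d⟩) h <;>
        simp only [Sum.elim_inl, Sum.elim_inr, Prod.mk.injEq] at h <;> grind
    · rintro ⟨u, v⟩
      obtain ⟨j, hj | hj⟩ := Int.even_or_odd' (u + v)
      · exact ⟨Sum.inl (j, u - j), Prod.ext (by simp) (by simp; grind)⟩
      · exact ⟨Sum.inr (j, u - j - 1), Prod.ext (by simp; grind) (by simp; grind)⟩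

lemma finite_natAbs_sq_eq (n : ℕ) : Finite {k : ℤ // k.natAbs ^ 2 = n} := by
  refine Set.Finite.subset (Set.finite_Icc (-n : ℤ) n) fun k (hk : k.natAbs ^ 2 = n) => ?_
  have : k.natAbs ≤ n := hk ▸ Nat.le_self_pow two_ne_zero _
  simp only [Set.mem_Icc]
  omega

lemma finite_two_mul_natAbs_sq_eq : ∀ n, Finite {k : ℤ // (2 * k).natAbs ^ 2 = n} :=
  finite_fiber_comp finite_natAbs_sq_eq (mul_right_injective₀ two_ne_zero)

lemma finite_two_mul_add_one_natAbs_sq_eq :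
    ∀ n, Finite {k : ℤ // (2 * k + 1).natAbs ^ 2 = n} :=
  finite_fiber_comp finite_natAbs_sq_eq
    ((add_left_injective 1).comp (mul_right_injective₀ two_ne_zero))

lemma theta_eq_evenTheta_add_oddTheta (R : Type*) [Semiring R] :
    theta R = evenTheta R + oddTheta R := by
  rw [theta, evenTheta, oddTheta, ← weightSeries_sumElim R finite_two_mul_natAbs_sq_eq
    finite_two_mul_add_one_natAbs_sq_eq, ← weightSeries_comp_equiv R intEvenOddEquiv]
  exact congrArg (weightSeries R) (funext fun x => by cases x <;> rfl)

lemma evenTheta_mem_residueSupported (R : Type*) [CommSemiring R] :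
    evenTheta R ∈ residueSupported R 4 0 :=
  weightSeries_mem_residueSupported R fun k => by
    rw [Int.natAbs_mul, mul_pow]
    exact Nat.modEq_zero_iff_dvd.2 (dvd_mul_right _ _)

lemma oddTheta_mem_residueSupported (R : Type*) [CommSemiring R] :
    oddTheta R ∈ residueSupported R 4 1 :=
  weightSeries_mem_residueSupported R fun k => by
    rw [← Int.natCast_modEq_iff, Nat.cast_pow, Int.natCast_natAbs, sq_abs]
    refine Int.modEq_iff_dvd.2 ⟨-(k ^ 2 + k), ?_⟩
    push_cast
    ring

lemma evenTheta_sq_add_oddTheta_sq (R : Type*) [CommRing R] :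
    evenTheta R ^ 2 + oddTheta R ^ 2 = expand 2 two_ne_zero (theta R ^ 2) := by
  have heven := finite_two_mul_natAbs_sq_eq
  have hodd := finite_two_mul_add_one_natAbs_sq_eq
  have hsq := finite_natAbs_sq_eq
  rw [sq (evenTheta R), sq (oddTheta R), sq (theta R), evenTheta, oddTheta, theta,
    weightSeries_mul R heven heven, weightSeries_mul R hodd hodd, weightSeries_mul R hsq hsq,
    ← weightSeries_sumElim R (finite_fiber_add heven heven) (finite_fiber_add hodd hodd),
    ← weightSeries_mul_left, ← weightSeries_comp_equiv R sumSqDuplicationEquiv]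
  refine congrArg (weightSeries R) (funext fun x => ?_)
  rcases x with ⟨a, b⟩ | ⟨a, b⟩
  · change (2 * a).natAbs ^ 2 + (2 * b).natAbs ^ 2 =
      2 * ((a + b).natAbs ^ 2 + (a - b).natAbs ^ 2)
    zify
    simp only [sq_abs]
    ring
  · change (2 * a + 1).natAbs ^ 2 + (2 * b + 1).natAbs ^ 2 =
      2 * ((a + b + 1).natAbs ^ 2 + (a - b).natAbs ^ 2)
    zify
    simp only [sq_abs]
    ring

lemma hasSum_evenTheta_sub_oddTheta (R : Type*) [Ring R] [TopologicalSpace R]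
    [IsTopologicalRing R] :
    HasSum (fun k : ℤ => (-1) ^ k.natAbs * (X : R⟦X⟧) ^ (k.natAbs ^ 2))
      (evenTheta R - oddTheta R) := by
  have heven := hasSum_weightSeries R finite_two_mul_natAbs_sq_eq
  have hodd := hasSum_weightSeries R finite_two_mul_add_one_natAbs_sq_eq
  rw [← intEvenOddEquiv.hasSum_iff, sub_eq_add_neg]
  refine HasSum.sum (heven.congr_fun fun k => ?_) (hodd.neg.congr_fun fun k => ?_)
  · change (-1) ^ (2 * k).natAbs * (X : R⟦X⟧) ^ ((2 * k).natAbs ^ 2) = _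
    rw [(Int.natAbs_even.2 (even_two_mul k)).neg_one_pow, one_mul]
  · change (-1) ^ (2 * k + 1).natAbs * (X : R⟦X⟧) ^ ((2 * k + 1).natAbs ^ 2) = _
    rw [(Int.natAbs_odd.2 (odd_two_mul_add_one k)).neg_one_pow, neg_one_mul]

end Theta

section ShanksIdentity

variable {R : Type*} [CommRing R]

/-- The error term in Shanks' finite form of Gauss's identity
`∏ (1 - x ^ i) / (1 + x ^ i) = ∑ (-1) ^ k * x ^ (k ^ 2)`. -/
def shanksRemainder (x : R) (n : ℕ) : R :=
  ∑ s ∈ range n, (-1) ^ (s + 1) * (∏ i ∈ range s, (1 + x ^ (i + 1))) *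
    (∏ i ∈ Ico (s + 1) n, (1 - x ^ (i + 1))) * x ^ ((s + 1) * (n + 1))

lemma shanksRemainder_succ (x : R) (n : ℕ) :
    shanksRemainder x (n + 1) = (1 + x ^ (n + 1)) * shanksRemainder x n +
      x ^ (n + 1) * ∏ i ∈ range n, (1 - x ^ (i + 1)) +
      (-1) ^ (n + 1) * x ^ ((n + 1) ^ 2) * ∏ i ∈ range (n + 1), (1 + x ^ (i + 1)) := by
  let B (s : ℕ) : R := (-1) ^ (s + 1) * (∏ i ∈ range s, (1 + x ^ (i + 1))) *
    (∏ i ∈ Ico s n, (1 - x ^ (i + 1))) * x ^ ((s + 1) * (n + 1))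
  have telescoping : ∑ s ∈ range n, (B (s + 1) - B s) = B n - B 0 := sum_range_sub B n
  have summand_succ : ∀ s ∈ range n, (-1) ^ (s + 1) * (∏ i ∈ range s, (1 + x ^ (i + 1))) *
      (∏ i ∈ Ico (s + 1) (n + 1), (1 - x ^ (i + 1))) * x ^ ((s + 1) * (n + 1 + 1)) =
      (1 + x ^ (n + 1)) * ((-1) ^ (s + 1) * (∏ i ∈ range s, (1 + x ^ (i + 1))) *
        (∏ i ∈ Ico (s + 1) n, (1 - x ^ (i + 1))) * x ^ ((s + 1) * (n + 1))) +
      (B (s + 1) - B s) := by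
    intro s hs
    have hsn := mem_range.1 hs
    simp only [B, prod_Ico_succ_top (show s + 1 ≤ n from hsn), prod_range_succ,
      prod_eq_prod_Ico_succ_bot hsn]
    ring
  rw [shanksRemainder, sum_range_succ, sum_congr rfl summand_succ, sum_add_distrib, ← mul_sum,
    telescoping, ← shanksRemainder]
  simp only [B, prod_range_succ, Ico_self, prod_empty, range_zero, ← range_eq_Ico]
  ring

lemma prod_one_add_mul_sum_neg_one_pow_mul_pow_sq (x : R) (n : ℕ) :
    (∏ i ∈ range n, (1 + x ^ (i + 1))) *
        ∑ k ∈ Icc (-n : ℤ) n, (-1) ^ k.natAbs * x ^ (k.natAbs ^ 2) =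
      (∏ i ∈ range n, (1 - x ^ (i + 1))) + 2 * shanksRemainder x n := by
  induction n with
  | zero => simp [shanksRemainder]
  | succ n ih =>
    have hpos : ((n : ℤ) + 1).natAbs = n + 1 := by omega
    have hneg : (-((n : ℤ) + 1)).natAbs = n + 1 := by omega
    rw [Nat.cast_succ, sum_Icc_succ_eq_add_endpoints, hpos, hneg, shanksRemainder_succ]
    simp only [prod_range_succ]
    linear_combination (1 + x ^ (n + 1)) * ih

lemma pow_dvd_shanksRemainder (x : R) (n : ℕ) : x ^ n ∣ shanksRemainder x n :=
  dvd_sum fun s _ => (pow_dvd_pow x (by nlinarith)).mul_left _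

end ShanksIdentity

section EulerSeries

lemma tendsto_zero_of_X_pow_dvd {R : Type*} [CommSemiring R] [TopologicalSpace R] {F : ℕ → R⟦X⟧}
    (hF : ∀ n, X ^ n ∣ F n) : Tendsto F atTop (𝓝 0) := by
  rw [tendsto_iff_coeff_tendsto]
  intro d
  refine tendsto_const_nhds.congr' ?_
  filter_upwards [eventually_gt_atTop d] with n hn
  rw [map_zero, X_pow_dvd_iff.1 (hF n) d hn]

variable (R : Type*) [CommRing R] [TopologicalSpace R]

variable {R} in
lemma continuous_expand {k : ℕ} (hk : k ≠ 0) : Continuous (expand (R := R) k hk) := by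
  refine continuous_iff_continuousAt.2 fun F => (tendsto_iff_coeff_tendsto _ _ _ _).2 fun d => ?_
  simp only [coeff_expand]
  split_ifs
  · exact (continuous_coeff R (d / k)).tendsto F
  · exact tendsto_const_nhds

/-- Euler's product `∏ i, (1 - X ^ (i + 1))`, often denoted `f_1`; its expansion
`∏ i, (1 - X ^ (k * (i + 1)))` is `f_k`. -/
noncomputable def eulerSeries : R⟦X⟧ := ∏' i : ℕ, (1 - X ^ (i + 1))

lemma hasProd_eulerSeries : HasProd (fun i : ℕ => 1 - X ^ (i + 1)) (eulerSeries R) :=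
  (multipliable_one_sub_X_pow R).hasProd

lemma hasProd_expand_eulerSeries {k : ℕ} (hk : k ≠ 0) :
    HasProd (fun i : ℕ => 1 - X ^ (k * (i + 1))) (expand k hk (eulerSeries R)) := by
  convert (hasProd_eulerSeries R).map (expand k hk) (continuous_expand hk) using 2 with i
  simp [pow_mul]

variable [T2Space R]

lemma constantCoeff_eulerSeries : constantCoeff (eulerSeries R) = 1 := by
  have h := (hasProd_eulerSeries R).map constantCoeff (continuous_constantCoeff R)
  exact h.unique (by simp [Function.comp_def])

lemma isUnit_eulerSeries : IsUnit (eulerSeries R) :=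
  isUnit_iff_constantCoeff.2 (constantCoeff_eulerSeries R ▸ isUnit_one)

variable [IsTopologicalRing R]

/-- Gauss's identity `f_1 ^ 2 / f_2 = θ(-q)`, the limit of Shanks' identity. -/
theorem eulerSeries_sq :
    eulerSeries R ^ 2 = expand 2 two_ne_zero (eulerSeries R) * (evenTheta R - oddTheta R) := by
  have tendsto_prod := (hasProd_eulerSeries R).tendsto_prod_nat
  have tendsto_sum := (hasSum_evenTheta_sub_oddTheta R).comp tendsto_Icc_neg
  have tendsto_prod_two := (hasProd_expand_eulerSeries R two_ne_zero).tendsto_prod_nat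
  have tendsto_remainder := tendsto_zero_of_X_pow_dvd (pow_dvd_shanksRemainder (X : R⟦X⟧))
  have tendsto_sq := tendsto_prod.mul (tendsto_prod.add (tendsto_remainder.const_mul 2))
  rw [mul_zero, add_zero, ← sq] at tendsto_sq
  refine tendsto_nhds_unique tendsto_sq ((tendsto_prod_two.mul tendsto_sum).congr fun n => ?_)
  have prod_two : ∏ i ∈ range n, (1 - (X : R⟦X⟧) ^ (2 * (i + 1))) =
      (∏ i ∈ range n, (1 - X ^ (i + 1))) * ∏ i ∈ range n, (1 + X ^ (i + 1)) := by
    rw [← prod_mul_distrib]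
    exact prod_congr rfl fun i _ => by ring
  rw [prod_two, mul_assoc, Function.comp_apply, prod_one_add_mul_sum_neg_one_pow_mul_pow_sq]

end EulerSeries

section EulerSeriesPowEight

variable (R : Type*) [CommRing R]

lemma evenTheta_mul_oddTheta_mem_residueSupported :
    evenTheta R * oddTheta R ∈ residueSupported R 4 1 :=
  mul_mem_residueSupported (evenTheta_mem_residueSupported R) (oddTheta_mem_residueSupported R)

lemma evenTheta_sq_mem_residueSupported : evenTheta R ^ 2 ∈ residueSupported R 2 0 := by
  rw [sq]
  exact residueSupported_le (m := 4) (by decide) rfl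
    (mul_mem_residueSupported (evenTheta_mem_residueSupported R)
      (evenTheta_mem_residueSupported R))

lemma oddTheta_sq_mem_residueSupported : oddTheta R ^ 2 ∈ residueSupported R 2 0 := by
  rw [sq]
  exact residueSupported_le (m := 4) (r := 2) (by decide) rfl
    (mul_mem_residueSupported (oddTheta_mem_residueSupported R)
      (oddTheta_mem_residueSupported R))

variable [TopologicalSpace R] [IsTopologicalRing R] [T2Space R]

lemma eulerSeries_pow_four_mul_theta_sq_mem_residueSupported :
    eulerSeries R ^ 4 * theta R ^ 2 ∈ residueSupported R 2 0 := by
  have key : eulerSeries R ^ 4 * theta R ^ 2 = expand 2 two_ne_zero (eulerSeries R ^ 2) *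
      ((evenTheta R ^ 2 - oddTheta R ^ 2) * (evenTheta R ^ 2 - oddTheta R ^ 2)) := by
    rw [theta_eq_evenTheta_add_oddTheta, map_pow,
      show eulerSeries R ^ 4 = (eulerSeries R ^ 2) ^ 2 by ring, eulerSeries_sq]
    ring
  have hdiff := sub_mem (evenTheta_sq_mem_residueSupported R) (oddTheta_sq_mem_residueSupported R)
  rw [key]
  exact mul_mem_residueSupported (expand_mem_residueSupported_zero two_ne_zero _)
    (mul_mem_residueSupported hdiff hdiff)

lemma eulerSeries_pow_eight :
    eulerSeries R ^ 8 = expand 2 two_ne_zero (eulerSeries R ^ 4) *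
        (expand 2 two_ne_zero (theta R ^ 4) + 4 • (evenTheta R ^ 2 * oddTheta R ^ 2)) -
      4 • (expand 2 two_ne_zero (eulerSeries R ^ 4 * theta R ^ 2) *
        (evenTheta R * oddTheta R)) := by
  have duplication := evenTheta_sq_add_oddTheta_sq R
  simp only [map_mul, map_pow] at duplication ⊢
  calc eulerSeries R ^ 8 = (eulerSeries R ^ 2) ^ 4 := by ring
    _ = expand 2 two_ne_zero (eulerSeries R) ^ 4 *
        (evenTheta R ^ 2 + oddTheta R ^ 2 - 2 * (evenTheta R * oddTheta R)) ^ 2 := by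
      rw [eulerSeries_sq]
      ring
    _ = _ := by
      rw [duplication]
      ring

theorem coeff_eulerSeries_pow_eight {n : ℕ} (hn : n ≡ 3 [MOD 4]) :
    coeff n (eulerSeries R ^ 8) = 0 := by
  have hpart2 := mul_mem_residueSupported
    (expand_mem_residueSupported_zero two_ne_zero (eulerSeries R ^ 4))
    (add_mem (expand_mem_residueSupported_zero two_ne_zero (theta R ^ 4))
      (nsmul_mem (mul_mem_residueSupported (evenTheta_sq_mem_residueSupported R)
        (oddTheta_sq_mem_residueSupported R)) 4))
  have hpart4 := nsmul_mem (mul_mem_residueSupported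
    (expand_mem_residueSupported two_ne_zero
      (eulerSeries_pow_four_mul_theta_sq_mem_residueSupported R))
    (evenTheta_mul_oddTheta_mem_residueSupported R)) 4
  have hn2 : ¬ n ≡ 0 [MOD 2] := fun h =>
    absurd ((hn.of_dvd (by decide : 2 ∣ 4)).symm.trans h) (by decide)
  have hn4 : ¬ n ≡ 1 [MOD 4] := fun h => absurd (hn.symm.trans h) (by decide)
  rw [eulerSeries_pow_eight, map_sub, coeff_eq_zero_of_mem_residueSupported hpart2 hn2,
    coeff_eq_zero_of_mem_residueSupported hpart4 hn4, sub_zero]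

end EulerSeriesPowEight

section ColoredMultisets

/-- Multisets of pairs of a part satisfying `p` and one of `k` colors. -/
abbrev ColoredMultiset (p : ℕ → Prop) (k : ℕ) : Type :=
  {M : Multiset (ℕ × ℕ) // ∀ x ∈ M, p x.1 ∧ x.2 < k}

/-- The sum of the parts of a colored multiset. -/
def ColoredMultiset.weight {p : ℕ → Prop} {k : ℕ} (M : ColoredMultiset p k) : ℕ :=
  (M.1.map Prod.fst).sum

instance uniqueColoredMultisetZero (p : ℕ → Prop) : Unique (ColoredMultiset p 0) where
  default := ⟨0, fun x hx => absurd hx (Multiset.notMem_zero x)⟩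
  uniq M := Subtype.ext <| Multiset.eq_zero_of_forall_notMem fun x hx =>
    Nat.not_lt_zero _ (M.2 x hx).2

/-- Splitting off the parts of the last color. -/
def coloredMultisetSuccEquiv (p : ℕ → Prop) (k : ℕ) :
    ColoredMultiset p (k + 1) ≃ ColoredMultiset p k × {M : Multiset ℕ // ∀ i ∈ M, p i} where
  toFun M := (⟨M.1.filter (·.2 < k), fun x hx =>
      ⟨(M.2 x (Multiset.mem_filter.1 hx).1).1, (Multiset.mem_filter.1 hx).2⟩⟩,
    ⟨(M.1.filter (¬ ·.2 < k)).map Prod.fst, fun i hi => by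
      obtain ⟨x, hx, rfl⟩ := Multiset.mem_map.1 hi
      exact (M.2 x (Multiset.mem_filter.1 hx).1).1⟩)
  invFun A := ⟨A.1.1 + A.2.1.map (·, k), fun x hx => by
    rcases Multiset.mem_add.1 hx with hx | hx
    · exact (A.1.2 x hx).imp_right Nat.lt_succ_of_lt
    · obtain ⟨i, hi, rfl⟩ := Multiset.mem_map.1 hx
      exact ⟨A.2.2 i hi, Nat.lt_succ_self k⟩⟩
  left_inv M := by
    refine Subtype.ext ?_
    have hlast : ((M.1.filter (¬ ·.2 < k)).map Prod.fst).map (·, k) =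
        M.1.filter (¬ ·.2 < k) := by
      rw [Multiset.map_map]
      refine (Multiset.map_congr rfl fun x hx => ?_).trans (Multiset.map_id _)
      have hxk := Multiset.mem_filter.1 hx
      have := (M.2 x hxk.1).2
      exact Prod.ext rfl (show k = x.2 by omega)
    dsimp only
    rw [hlast, Multiset.filter_add_not]
  right_inv A := by
    have hfst : ∀ x ∈ A.1.1, x.2 < k := fun x hx => (A.1.2 x hx).2
    refine Prod.ext (Subtype.ext ?_) (Subtype.ext ?_)
    · simp [Multiset.filter_add, Multiset.filter_eq_self.2 hfst, Multiset.filter_map]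
    · have : A.1.1.filter (¬ ·.2 < k) = 0 := Multiset.filter_eq_nil.2 fun x hx h => h (hfst x hx)
      simp only [not_lt] at this
      simp [Multiset.filter_add, Multiset.filter_map, this]

/-- The multisets of sum `n` with parts satisfying `p` are the `p`-restricted partitions of `n`. -/
def restrictedPartitionEquiv (p : ℕ → Prop) [DecidablePred p] (hp : ∀ i, p i → 0 < i) (n : ℕ) :
    {M : {M : Multiset ℕ // ∀ i ∈ M, p i} // M.1.sum = n} ≃ Nat.Partition.restricted n p where
  toFun M := ⟨⟨M.1.1, fun hi => hp _ (M.1.2 _ hi), M.2⟩, by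
    simpa [Nat.Partition.restricted] using M.1.2⟩
  invFun P := ⟨⟨P.1.parts, by simpa [Nat.Partition.restricted] using P.2⟩, P.1.parts_sum⟩
  left_inv _ := rfl
  right_inv _ := rfl

lemma weight_coloredMultisetSuccEquiv {p : ℕ → Prop} {k : ℕ} (M : ColoredMultiset p (k + 1)) :
    (coloredMultisetSuccEquiv p k M).1.weight + (coloredMultisetSuccEquiv p k M).2.1.sum =
      M.weight := by
  obtain ⟨A, rfl⟩ := (coloredMultisetSuccEquiv p k).symm.surjective M
  rw [Equiv.apply_symm_apply]
  simp [coloredMultisetSuccEquiv, ColoredMultiset.weight]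

variable {p : ℕ → Prop} (hp : ∀ i, p i → 0 < i)
include hp

lemma finite_multiset_sum_eq (n : ℕ) :
    Finite {M : {M : Multiset ℕ // ∀ i ∈ M, p i} // M.1.sum = n} := by
  classical exact Finite.of_equiv _ (restrictedPartitionEquiv p hp n).symm

lemma finite_coloredMultiset_weight_eq (k n : ℕ) :
    Finite {M : ColoredMultiset p k // M.weight = n} := by
  induction k generalizing n with
  | zero => infer_instance
  | succ k ih =>
    simpa only [weight_coloredMultisetSuccEquiv] using finite_fiber_comp
      (finite_fiber_add ih (finite_multiset_sum_eq hp)) (coloredMultisetSuccEquiv p k).injective n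

lemma weightSeries_multiset_sum (R : Type*) [Semiring R] [DecidablePred p] :
    weightSeries R (fun M : {M : Multiset ℕ // ∀ i ∈ M, p i} => M.1.sum) =
      PowerSeries.mk fun n => (#(Nat.Partition.restricted n p) : R) := by
  ext n
  rw [weightSeries, coeff_mk, coeff_mk, Nat.card_congr (restrictedPartitionEquiv p hp n),
    Nat.card_eq_fintype_card, Fintype.card_coe]

lemma weightSeries_coloredMultiset (R : Type*) [Semiring R] [DecidablePred p] (k : ℕ) :
    weightSeries R (ColoredMultiset.weight (p := p) (k := k)) =
      (PowerSeries.mk fun n => (#(Nat.Partition.restricted n p) : R)) ^ k := by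
  induction k with
  | zero =>
    rw [weightSeries_of_unique, pow_zero]
    exact pow_zero X
  | succ k ih =>
    rw [pow_succ, ← ih, ← weightSeries_multiset_sum hp,
      weightSeries_mul R (finite_coloredMultiset_weight_eq hp k) (finite_multiset_sum_eq hp),
      ← weightSeries_comp_equiv R (coloredMultisetSuccEquiv p k)]
    exact congrArg (weightSeries R) (funext fun M => (weight_coloredMultisetSuccEquiv M).symm)

end ColoredMultisets

section RegularSeries

variable (R : Type*)

/-- The generating series of the partitions into parts divisible by neither `l` nor `m`. -/
noncomputable def regularSeries [Semiring R] (l m : ℕ) : R⟦X⟧ :=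
  PowerSeries.mk fun n => (#(Nat.Partition.restricted n fun i => ¬ l ∣ i ∧ ¬ m ∣ i) : R)

lemma mk_coloredRegular [Semiring R] (k : ℕ) (l m : ℕ) :
    (PowerSeries.mk fun n => (coloredRegular k l m n : R)) = regularSeries R l m ^ k := by
  rw [regularSeries, ← weightSeries_coloredMultiset fun i hi =>
    Nat.pos_of_ne_zero fun h => hi.1 (h ▸ dvd_zero l)]
  ext n
  simp only [coloredRegular, weightSeries, coeff_mk, ← and_assoc]
  exact congrArg _ (Nat.card_congr (Equiv.subtypeSubtypeEquivSubtypeInter _ _).symm)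

variable [CommRing R] [TopologicalSpace R]

lemma hasProd_ite_dvd_eulerSeries {k : ℕ} (hk : k ≠ 0) :
    HasProd (fun i : ℕ => if k ∣ i + 1 then 1 - (X : R⟦X⟧) ^ (i + 1) else 1)
      (expand k hk (eulerSeries R)) := by
  have hsub (i : ℕ) : k * (i + 1) - 1 + 1 = k * (i + 1) :=
    Nat.sub_add_cancel (Nat.mul_pos (Nat.pos_of_ne_zero hk) i.succ_pos)
  have hinj : Function.Injective fun i : ℕ => k * (i + 1) - 1 := fun a b h => by
    have := congrArg (· + 1) h
    simpa only [hsub, Nat.mul_right_inj hk, add_left_inj] using this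
  refine (hinj.hasProd_iff fun i hi => if_neg ?_).1 ?_
  · rintro ⟨c, hc⟩
    cases c with
    | zero => exact absurd hc (by simp)
    | succ c => exact hi ⟨c, by simp only; omega⟩
  · refine (hasProd_expand_eulerSeries R hk).congr_fun fun i => ?_
    simp only [Function.comp_apply, hsub, dvd_mul_right, if_true]

variable [IsTopologicalRing R] [T2Space R]

lemma regularSeries_mul_eulerSeries_mul {l m : ℕ} (hl : l ≠ 0) (hm : m ≠ 0) :
    regularSeries R l m * eulerSeries R * expand (l.lcm m) (Nat.lcm_ne_zero hl hm) (eulerSeries R) =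
      expand l hl (eulerSeries R) * expand m hm (eulerSeries R) := by
  have hleft := ((Nat.Partition.hasProd_powerSeriesMk_card_restricted R
    fun i => ¬ l ∣ i ∧ ¬ m ∣ i).mul (hasProd_eulerSeries R)).mul
    (hasProd_ite_dvd_eulerSeries R (Nat.lcm_ne_zero hl hm))
  have hright := (hasProd_ite_dvd_eulerSeries R hl).mul (hasProd_ite_dvd_eulerSeries R hm)
  refine hleft.unique (hright.congr_fun fun i => ?_)
  have hgeom : (∑' j : ℕ, (X : R⟦X⟧) ^ ((i + 1) * j)) * (1 - X ^ (i + 1)) = 1 := by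
    simp only [pow_mul]
    exact tsum_pow_mul_one_sub_of_constantCoeff_eq_zero (by simp)
  by_cases hli : l ∣ i + 1 <;> by_cases hmi : m ∣ i + 1 <;>
    simp [hli, hmi, Nat.lcm_dvd_iff, hgeom]

end RegularSeries

lemma coloredRegular_prime_modEq_zero (p : ℕ) [hp : Fact p.Prime] (l m : ℕ) {n : ℕ}
    (hn : ¬ p ∣ n) : coloredRegular p l m n ≡ 0 [MOD p] := by
  rw [← ZMod.natCast_eq_natCast_iff, Nat.cast_zero,
    ← coeff_mk n fun n => (coloredRegular p l m n : ZMod p), mk_coloredRegular,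
    pow_prime_eq_expand, coeff_expand_of_not_dvd _ _ _ hn]

section ModFive

lemma regularSeries_five_mul {m : ℕ} (hm : m ≠ 0) :
    regularSeries (ZMod 5) 5 m * expand (Nat.lcm 5 m) (Nat.lcm_ne_zero (by decide) hm)
      (eulerSeries (ZMod 5)) = eulerSeries (ZMod 5) ^ 4 * expand m hm (eulerSeries (ZMod 5)) := by
  have : Fact (Nat.Prime 5) := ⟨by decide⟩
  have h := regularSeries_mul_eulerSeries_mul (ZMod 5) (l := 5) (by decide) hm
  rw [← pow_prime_eq_expand 5] at h
  refine (isUnit_eulerSeries (ZMod 5)).mul_left_cancel ?_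
  linear_combination h

lemma exists_regularSeries_five_sq_eq {m : ℕ} (hm : m ≠ 0) :
    ∃ G : (ZMod 5)⟦X⟧, regularSeries (ZMod 5) 5 m ^ 2 =
      eulerSeries (ZMod 5) ^ 8 * expand m hm G := by
  have h := regularSeries_five_mul hm
  obtain ⟨c, hc⟩ := Nat.dvd_lcm_right 5 m
  have hc0 : c ≠ 0 := right_ne_zero_of_mul (hc ▸ Nat.lcm_ne_zero (by decide) hm)
  obtain ⟨V, hV⟩ := (isUnit_eulerSeries (ZMod 5)).exists_right_inv
  have hinv : expand m hm (expand c hc0 (eulerSeries (ZMod 5))) *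
      expand m hm (expand c hc0 V) = 1 := by
    simp only [← map_mul, hV, map_one]
  simp only [hc, expand_mul (hp := hm) (hq := hc0)] at h
  refine ⟨(eulerSeries (ZMod 5) * expand c hc0 V) ^ 2, ?_⟩
  have hR : regularSeries (ZMod 5) 5 m =
      eulerSeries (ZMod 5) ^ 4 * expand m hm (eulerSeries (ZMod 5) * expand c hc0 V) := by
    rw [map_mul]
    linear_combination expand m hm (expand c hc0 V) * h - regularSeries (ZMod 5) 5 m * hinv
  rw [hR, map_pow]
  ring

lemma coloredRegular_two_five_modEq_zero {m n : ℕ} (hm : m ≠ 0) (h4m : 4 ∣ m)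
    (hn : n ≡ 3 [MOD 4]) : coloredRegular 2 5 m n ≡ 0 [MOD 5] := by
  obtain ⟨G, hG⟩ := exists_regularSeries_five_sq_eq hm
  rw [← ZMod.natCast_eq_natCast_iff, Nat.cast_zero,
    ← coeff_mk n fun n => (coloredRegular 2 5 m n : ZMod 5), mk_coloredRegular, hG]
  exact coeff_mul_eq_zero_of_mem_residueSupported
    (fun n hn => coeff_eulerSeries_pow_eight (ZMod 5) hn)
    (residueSupported_le h4m rfl (expand_mem_residueSupported_zero hm G)) hn

end ModFive

theorem stmt_15_general (t : ℕ) (ht : 0 < t) (n : ℕ) :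
    coloredRegular 2 5 (4 * t) (4 * n + 3) ≡ 0 [MOD 10] := by
  have hmod2 : coloredRegular 2 5 (4 * t) (4 * n + 3) ≡ 0 [MOD 2] :=
    coloredRegular_prime_modEq_zero 2 5 (4 * t) (by omega)
  have hmod5 : coloredRegular 2 5 (4 * t) (4 * n + 3) ≡ 0 [MOD 5] :=
    coloredRegular_two_five_modEq_zero (by omega) (dvd_mul_right 4 t)
      (Nat.modEq_iff_dvd.2 ⟨-n, by push_cast; ring⟩)
  exact (Nat.modEq_and_modEq_iff_modEq_mul (by decide)).1 ⟨hmod2, hmod5⟩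

theorem stmt_15 (t : ℕ) (ht : 0 < t) (h5 : ¬ 5 ∣ t) (n : ℕ) :
    coloredRegular 2 5 (4 * t) (4 * n + 3) ≡ 0 [MOD 10] :=
  stmt_15_general t ht n
end

section
/- For every nonnegative integer n, b^2_{8,5}(4n+1) ≡ 2·b^2_{2,5}(n) (mod 10). Moreover, for every positive odd integer t and every nonnegative integer n, b^3_{2,3t}(3n+2) ≡ 0 (mod 6). -/
/-!
Write `f_k = ∏ (1 - q ^ (k j))`, and let `W_{l,m}` be the product of `1 - q ^ j` over the multiples
`j` of `l` that `m` does not divide. The generating function of `b^k_{l,m}` is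
`(W_{l,m} f_m / f_1) ^ k`, which modulo a prime `m = p` equals `f_1 ^ (k (p - 1)) W_{l,p} ^ k` by
Frobenius.

For `k = 2`, `p = 5` the first factor is `f_1 ^ 8`. Since `φ(-q) = f_1 ^ 2 / f_2` and
`ψ(q) = f_2 ^ 2 / f_1`, Jacobi's identity `φ(q) ^ 4 - φ(-q) ^ 4 = 16 q ψ(q ^ 2) ^ 4` says that the
odd part of `f_1 ^ 8` is `-8 q f_4 ^ 8`; as `W_{4l,5}(q) = W_{l,5}(q ^ 4)`, extracting the exponents
`4 n + 1` returns `-8` times the series for `l`, and `-8 = 2` modulo `5`.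

For `k = 3`, `p = 2` the first factor is `f_1 ^ 3 = ψ` modulo `2`, whose exponents, the triangular
numbers, are never `2` modulo `3`, while `W_{3t,2}` is a series in `q ^ 3`.

The remaining congruences, modulo `p = k`, hold because the generating function is a `k`-th power.
-/

open PowerSeries Filter Topology
open scoped PowerSeries.WithPiTopology

namespace ColoredPartition

section Substitution

variable {R : Type*} [CommRing R]

theorem continuous_expand [TopologicalSpace R] (k : ℕ) (hk : k ≠ 0) :
    Continuous (expand k hk : R⟦X⟧ → R⟦X⟧) := by
  refine continuous_iff_continuousAt.2 fun f ↦ ?_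
  rw [ContinuousAt, WithPiTopology.tendsto_iff_coeff_tendsto]
  intro d
  simp only [coeff_expand]
  split_ifs
  · exact (WithPiTopology.continuous_coeff R _).tendsto f
  · exact tendsto_const_nhds

theorem continuous_rescale [TopologicalSpace R] [ContinuousMul R] (a : R) :
    Continuous (rescale a : R⟦X⟧ → R⟦X⟧) := by
  refine continuous_iff_continuousAt.2 fun f ↦ ?_
  rw [ContinuousAt, WithPiTopology.tendsto_iff_coeff_tendsto]
  intro d
  simp only [coeff_rescale]
  exact ((WithPiTopology.continuous_coeff R _).tendsto f).const_mul _

theorem rescale_neg_one_expand {k : ℕ} (hk : k ≠ 0) (hk' : Even k) (f : R⟦X⟧) :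
    rescale (-1) (expand k hk f) = expand k hk f := by
  ext n
  rw [coeff_rescale]
  by_cases hn : k ∣ n
  · rw [(hk'.trans_dvd hn).neg_one_pow, one_mul]
  · rw [coeff_expand_of_not_dvd _ _ _ hn, mul_zero]

end Substitution

section QProduct

/-- The product `∏_{a ∈ A} (1 - X ^ a)`. If `0 ∈ A` it is `0`. -/
noncomputable def qProduct (A : Set ℕ) : ℤ⟦X⟧ := ∏' a : A, (1 - X ^ (a : ℕ))

variable (A : Set ℕ)

theorem multipliable_one_sub_X_pow : Multipliable fun a : A ↦ (1 - X ^ (a : ℕ) : ℤ⟦X⟧) := by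
  classical
  refine multipliable_subtype_iff_mulIndicator (f := fun a : ℕ ↦ (1 - X ^ a : ℤ⟦X⟧)).2 ?_
  have hfactor : A.mulIndicator (fun a ↦ (1 - X ^ a : ℤ⟦X⟧)) =
      fun a ↦ 1 + A.indicator (fun a ↦ -X ^ a) a := by
    ext1 a
    by_cases ha : a ∈ A <;> simp [ha, sub_eq_add_neg]
  rw [hfactor]
  refine WithPiTopology.multipliable_one_add_of_tendsto_order_atTop_nhds_top ℤ
    (ENat.tendsto_nhds_top_iff_natCast_lt.2 fun n ↦ eventually_atTop.2 ⟨n + 1, fun a ha ↦ ?_⟩)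
  by_cases haA : a ∈ A
  · simpa [haA, order_neg, order_X_pow] using ha
  · simp [haA]

theorem tendsto_prod_range_qProduct [DecidablePred (· ∈ A)] :
    Tendsto (fun N ↦ ∏ a ∈ Finset.range N with a ∈ A, (1 - X ^ a : ℤ⟦X⟧)) atTop
      (𝓝 (qProduct A)) := by
  have h : HasProd (A.mulIndicator fun a ↦ (1 - X ^ a : ℤ⟦X⟧)) (qProduct A) :=
    hasProd_subtype_iff_mulIndicator.1 (multipliable_one_sub_X_pow A).hasProd
  refine h.tendsto_prod_nat.congr fun N ↦ ?_
  rw [Finset.prod_filter]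
  exact Finset.prod_congr rfl fun a _ ↦ by simp only [Set.mulIndicator_apply]

theorem tendsto_prod_range_comp {u : ℕ → ℕ} (hu : Function.Injective u) :
    Tendsto (fun N ↦ ∏ i ∈ Finset.range N, (1 - X ^ u i : ℤ⟦X⟧)) atTop
      (𝓝 (qProduct (Set.range u))) :=
  ((Equiv.ofInjective u hu).hasProd_iff.2
    (multipliable_one_sub_X_pow (Set.range u)).hasProd).tendsto_prod_nat

theorem expand_qProduct {k : ℕ} (hk : k ≠ 0) :
    expand k hk (qProduct A) = qProduct ((k * ·) '' A) := by
  have himage := tprod_image (fun a ↦ (1 - X ^ a : ℤ⟦X⟧))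
    (mul_right_injective₀ hk).injOn (s := A)
  rw [qProduct, qProduct, himage,
    (multipliable_one_sub_X_pow A).map_tprod (expand k hk) (continuous_expand k hk)]
  simp only [map_sub, map_one, map_pow, expand_X, pow_mul]

variable {A}

theorem qProduct_union {B : Set ℕ} (h : Disjoint A B) :
    qProduct (A ∪ B) = qProduct A * qProduct B :=
  Multipliable.tprod_union_disjoint (f := fun a ↦ (1 - X ^ a : ℤ⟦X⟧)) h
    (multipliable_one_sub_X_pow A) (multipliable_one_sub_X_pow B)

theorem isUnit_qProduct (hA : 0 ∉ A) : IsUnit (qProduct A) := by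
  have hfactor (a : A) : constantCoeff (1 - X ^ (a : ℕ) : ℤ⟦X⟧) = 1 := by
    have ha : (a : ℕ) ≠ 0 := ne_of_mem_of_not_mem a.2 hA
    simp [ha]
  rw [PowerSeries.isUnit_iff_constantCoeff, qProduct, (multipliable_one_sub_X_pow A).map_tprod
    constantCoeff (WithPiTopology.continuous_constantCoeff ℤ)]
  simp only [hfactor, tprod_one, isUnit_one]

theorem rescale_neg_one_qProduct_mul_self (hA : ∀ a ∈ A, Odd a) :
    rescale (-1) (qProduct A) * qProduct A = expand 2 two_ne_zero (qProduct A) := by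
  have hM := multipliable_one_sub_X_pow A
  have hfactor (a : A) : rescale (-1 : ℤ) (1 - X ^ (a : ℕ)) * (1 - X ^ (a : ℕ)) =
      expand 2 two_ne_zero (1 - X ^ (a : ℕ) : ℤ⟦X⟧) := by
    rw [map_sub, map_sub, map_one, map_one, map_pow, map_pow, expand_X, rescale_neg_one_X,
      (hA a a.2).neg_pow]
    ring
  calc rescale (-1) (qProduct A) * qProduct A
      = (∏' a : A, rescale (-1 : ℤ) (1 - X ^ (a : ℕ))) * ∏' a : A, (1 - X ^ (a : ℕ)) := by
        rw [qProduct, hM.map_tprod _ (continuous_rescale _)]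
    _ = ∏' a : A, rescale (-1 : ℤ) (1 - X ^ (a : ℕ)) * (1 - X ^ (a : ℕ)) :=
        ((hM.map (rescale (-1 : ℤ)) (continuous_rescale _)).tprod_mul hM).symm
    _ = ∏' a : A, expand 2 two_ne_zero (1 - X ^ (a : ℕ) : ℤ⟦X⟧) := tprod_congr hfactor
    _ = expand 2 two_ne_zero (qProduct A) := (hM.map_tprod _ (continuous_expand _ _)).symm

end QProduct

section WeightedMultisets

variable {ι : Type*} (w : ι → ℕ)

/-- The multisets with elements in `s` and total weight `n`, for the weight function `w`. -/
def multisetsOfWeight (s : Set ι) (n : ℕ) : Set (Multiset ι) :=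
  {M | (∀ i ∈ M, i ∈ s) ∧ (M.map w).sum = n}

/-- The generating function counting the multisets with elements in `s` by weight.
A weight carried by infinitely many multisets contributes `0`. -/
noncomputable def weightSeries (s : Set ι) : ℤ⟦X⟧ :=
  mk fun n ↦ ((multisetsOfWeight w s n).ncard : ℤ)

variable {w}

theorem le_of_mem_of_mem_multisetsOfWeight {s : Set ι} {n : ℕ} {M : Multiset ι}
    (hM : M ∈ multisetsOfWeight w s n) {i : ι} (hi : i ∈ M) : w i ≤ n :=
  hM.2 ▸ Multiset.single_le_sum (fun _ _ ↦ Nat.zero_le _) _ (Multiset.mem_map_of_mem w hi)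

theorem multisetsOfWeight_congr {s t : Set ι} {n : ℕ} (h : ∀ i, w i ≤ n → (i ∈ s ↔ i ∈ t)) :
    multisetsOfWeight w s n = multisetsOfWeight w t n := by
  ext M
  constructor <;> intro hM <;> refine ⟨fun i hi ↦ ?_, hM.2⟩ <;>
    have hi' := h i (le_of_mem_of_mem_multisetsOfWeight hM hi)
  exacts [hi'.1 (hM.1 i hi), hi'.2 (hM.1 i hi)]

theorem finite_multisetsOfWeight {s : Finset ι} (hw : ∀ i ∈ s, w i ≠ 0) (n : ℕ) :
    (multisetsOfWeight w s n).Finite := by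
  classical
  refine (Set.finite_Iic (n • s.val)).subset fun M hM ↦ Multiset.le_iff_count.2 fun i ↦ ?_
  by_cases hi : i ∈ M
  · rw [Multiset.count_nsmul, Multiset.count_eq_one_of_mem s.nodup (hM.1 i hi), mul_one]
    calc M.count i ≤ (M.map w).card := by
          simpa only [Multiset.card_map] using Multiset.count_le_card i M
      _ ≤ (M.map w).sum := by
          simpa only [nsmul_eq_mul, mul_one, Nat.cast_id] using
            Multiset.card_nsmul_le_sum (s := M.map w) (a := 1) fun x hx ↦ by
              obtain ⟨j, hj, rfl⟩ := Multiset.mem_map.1 hx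
              exact Nat.one_le_iff_ne_zero.2 (hw j (hM.1 j hj))
      _ = n := hM.2
  · simp only [Multiset.count_eq_zero_of_notMem hi, Nat.zero_le]

theorem multisetsOfWeight_insert (a : ι) (s : Set ι) (n : ℕ) :
    multisetsOfWeight w (insert a s) (n + w a) =
      multisetsOfWeight w s (n + w a) ∪ (a ::ₘ ·) '' multisetsOfWeight w (insert a s) n := by
  ext M
  constructor
  · intro hM
    by_cases ha : a ∈ M
    · obtain ⟨M, rfl⟩ := Multiset.exists_cons_of_mem ha
      refine Or.inr ⟨M, ⟨fun i hi ↦ hM.1 i (Multiset.mem_cons_of_mem hi), ?_⟩, rfl⟩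
      have hsum := hM.2
      rw [Multiset.map_cons, Multiset.sum_cons] at hsum
      lia
    · exact Or.inl ⟨fun i hi ↦ (hM.1 i hi).resolve_left (ne_of_mem_of_not_mem hi ha), hM.2⟩
  · rintro (hM | ⟨M, hM, rfl⟩)
    · exact ⟨fun i hi ↦ Or.inr (hM.1 i hi), hM.2⟩
    · refine ⟨fun i hi ↦ ?_, ?_⟩
      · exact (Multiset.mem_cons.1 hi).elim Or.inl (hM.1 i)
      · rw [Multiset.map_cons, Multiset.sum_cons, hM.2, add_comm]

theorem ncard_multisetsOfWeight_insert {a : ι} {s : Set ι} {n : ℕ} (ha : a ∉ s)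
    (hfin : (multisetsOfWeight w (insert a s) (n + w a)).Finite) :
    (multisetsOfWeight w (insert a s) (n + w a)).ncard =
      (multisetsOfWeight w s (n + w a)).ncard + (multisetsOfWeight w (insert a s) n).ncard := by
  rw [multisetsOfWeight_insert] at hfin ⊢
  have hdisj : Disjoint (multisetsOfWeight w s (n + w a))
      ((a ::ₘ ·) '' multisetsOfWeight w (insert a s) n) := by
    refine Set.disjoint_left.2 ?_
    rintro _ hM ⟨M, -, rfl⟩
    exact ha (hM.1 a (Multiset.mem_cons_self a M))
  rw [Set.ncard_union_eq hdisj (hfin.subset Set.subset_union_left)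
    (hfin.subset Set.subset_union_right),
    Set.ncard_image_of_injective _ fun _ _ ↦ (Multiset.cons_inj_right a).1]

theorem weightSeries_insert_mul {a : ι} {s : Set ι} (ha : a ∉ s)
    (hfin : ∀ n, (multisetsOfWeight w (insert a s) n).Finite) :
    weightSeries w (insert a s) * (1 - X ^ w a) = weightSeries w s := by
  ext n
  simp only [weightSeries, mul_sub, mul_one, map_sub, coeff_mul_X_pow', coeff_mk]
  split_ifs with hn
  · obtain ⟨n, rfl⟩ := Nat.exists_eq_add_of_le' hn
    rw [ncard_multisetsOfWeight_insert ha (hfin _), Nat.add_sub_cancel]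
    push_cast
    ring
  · have hs : multisetsOfWeight w (insert a s) n = multisetsOfWeight w s n :=
      multisetsOfWeight_congr fun i hi ↦
        Set.mem_insert_iff.trans (or_iff_right (by rintro rfl; exact hn hi))
    rw [hs, sub_zero]

theorem weightSeries_empty : weightSeries w ∅ = 1 := by
  have h (n : ℕ) : multisetsOfWeight w ∅ n = if n = 0 then {0} else ∅ := by
    ext M
    split_ifs with hn <;> constructor
    · exact fun hM ↦ Multiset.eq_zero_of_forall_notMem hM.1
    · rintro rfl
      exact ⟨fun i hi ↦ absurd hi (Multiset.notMem_zero i), hn.symm⟩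
    · rintro ⟨hM, hsum⟩
      obtain rfl := Multiset.eq_zero_of_forall_notMem hM
      exact hn hsum.symm
    · exact False.elim
  ext n
  rw [weightSeries, coeff_mk, coeff_one, h]
  split_ifs <;> simp

theorem weightSeries_mul_prod (s : Finset ι) (hw : ∀ i ∈ s, w i ≠ 0) :
    weightSeries w s * ∏ i ∈ s, (1 - X ^ w i) = 1 := by
  classical
  induction s using Finset.induction_on with
  | empty => rw [Finset.coe_empty, weightSeries_empty, Finset.prod_empty, mul_one]
  | insert a s ha ih =>
    have hfin := finite_multisetsOfWeight hw
    rw [Finset.coe_insert] at hfin ⊢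
    rw [Finset.prod_insert ha, ← mul_assoc, weightSeries_insert_mul (mod_cast ha) hfin]
    exact ih fun i hi ↦ hw i (Finset.mem_insert_of_mem hi)

theorem tendsto_weightSeries {t : ℕ → Set ι} {s : Set ι}
    (h : ∀ N i, w i < N → (i ∈ t N ↔ i ∈ s)) :
    Tendsto (fun N ↦ weightSeries w (t N)) atTop (𝓝 (weightSeries w s)) := by
  rw [WithPiTopology.tendsto_iff_coeff_tendsto]
  intro d
  refine tendsto_atTop_of_eventually_const (i₀ := d + 1) fun N hN ↦ ?_
  rw [weightSeries, weightSeries, coeff_mk, coeff_mk,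
    multisetsOfWeight_congr fun i hi ↦ h N i (hi.trans_lt hN)]

theorem weightSeries_fst_mul_qProduct_pow {A : Set ℕ} (hA : 0 ∉ A) (k : ℕ) :
    weightSeries Prod.fst (A ×ˢ Set.Iio k) * qProduct A ^ k = 1 := by
  classical
  let t (N : ℕ) : Finset (ℕ × ℕ) := {a ∈ Finset.range N | a ∈ A} ×ˢ Finset.range k
  have ht (N : ℕ) (x : ℕ × ℕ) (hx : x.1 < N) :
      x ∈ (t N : Set (ℕ × ℕ)) ↔ x ∈ A ×ˢ Set.Iio k := by
    simp [t, hx]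
  have hprod (N : ℕ) : ∏ x ∈ t N, (1 - X ^ x.1 : ℤ⟦X⟧) =
      (∏ a ∈ Finset.range N with a ∈ A, (1 - X ^ a)) ^ k := by
    simp only [t, Finset.prod_product, Finset.prod_const, Finset.card_range, Finset.prod_pow]
  have ht_ne (N : ℕ) (x : ℕ × ℕ) (hx : x ∈ t N) : x.1 ≠ 0 :=
    ne_of_mem_of_not_mem (Finset.mem_filter.1 (Finset.mem_product.1 hx).1).2 hA
  refine tendsto_nhds_unique
    ((tendsto_weightSeries ht).mul ((tendsto_prod_range_qProduct A).pow k))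
    (tendsto_const_nhds.congr fun N ↦ ?_)
  rw [← hprod, weightSeries_mul_prod (t N) (ht_ne N)]

end WeightedMultisets

section EulerProducts

/-- The Euler product `f_k = ∏_{j ≥ 1} (1 - X ^ (k * j))`. -/
noncomputable def eulerProduct (k : ℕ) : ℤ⟦X⟧ := qProduct {j | j ≠ 0 ∧ k ∣ j}

/-- The product of `1 - X ^ j` over the multiples `j` of `l` that are not multiples of `m`. -/
noncomputable def regularProduct (l m : ℕ) : ℤ⟦X⟧ := qProduct {j | l ∣ j ∧ ¬ m ∣ j}

theorem isUnit_eulerProduct (k : ℕ) : IsUnit (eulerProduct k) :=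
  isUnit_qProduct fun h ↦ h.1 rfl

theorem isUnit_regularProduct (l m : ℕ) : IsUnit (regularProduct l m) :=
  isUnit_qProduct fun h ↦ h.2 (dvd_zero m)

theorem expand_eulerProduct {c : ℕ} (hc : c ≠ 0) (k : ℕ) :
    expand c hc (eulerProduct k) = eulerProduct (c * k) := by
  rw [eulerProduct, eulerProduct, expand_qProduct]
  congr 1
  ext j
  constructor
  · rintro ⟨i, ⟨hi, hki⟩, rfl⟩
    exact ⟨mul_ne_zero hc hi, mul_dvd_mul_left c hki⟩
  · rintro ⟨hj, i, rfl⟩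
    exact ⟨k * i, ⟨right_ne_zero_of_mul (mul_assoc c k i ▸ hj), dvd_mul_right k i⟩,
      (mul_assoc c k i).symm⟩

theorem expand_regularProduct {c m : ℕ} (hc : c ≠ 0) (hcm : c.Coprime m) (l : ℕ) :
    expand c hc (regularProduct l m) = regularProduct (c * l) m := by
  rw [regularProduct, regularProduct, expand_qProduct]
  congr 1
  ext j
  constructor
  · rintro ⟨i, ⟨hli, hmi⟩, rfl⟩
    exact ⟨mul_dvd_mul_left c hli, fun h ↦ hmi (hcm.symm.dvd_of_dvd_mul_left h)⟩
  · rintro ⟨⟨i, rfl⟩, hm⟩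
    exact ⟨l * i, ⟨dvd_mul_right l i, fun h ↦ hm (mul_assoc c l i ▸ h.mul_left c)⟩,
      (mul_assoc c l i).symm⟩

theorem regularProduct_mul_eulerProduct (l m : ℕ) :
    regularProduct l m * eulerProduct (l.lcm m) = eulerProduct l := by
  rw [regularProduct, eulerProduct, eulerProduct, ← qProduct_union]
  · congr 1
    ext j
    have hj0 : ¬ m ∣ j → j ≠ 0 := fun h hj ↦ h (hj ▸ dvd_zero m)
    simp only [Set.mem_union, Set.mem_ofPred_eq, Nat.lcm_dvd_iff]
    tauto
  · exact Set.disjoint_left.2 fun j hj hj' ↦ hj.2 ((Nat.dvd_lcm_right l m).trans hj'.2)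

theorem regularProduct_one_mul_eulerProduct (m : ℕ) :
    regularProduct 1 m * eulerProduct m = eulerProduct 1 := by
  simpa only [Nat.lcm_one_left] using regularProduct_mul_eulerProduct 1 m

theorem qProduct_not_dvd_mul_regularProduct (l m : ℕ) :
    qProduct {j | ¬ l ∣ j ∧ ¬ m ∣ j} * regularProduct l m = regularProduct 1 m := by
  rw [regularProduct, regularProduct, ← qProduct_union]
  · congr 1
    ext j
    simp only [Set.mem_union, Set.mem_ofPred_eq, one_dvd, true_and]
    tauto
  · exact Set.disjoint_left.2 fun j hj hj' ↦ hj.1 hj'.1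

end EulerProducts

section GeneratingFunction

/-- The generating function of `coloredRegular k l m`. -/
noncomputable def coloredRegularSeries (k l m : ℕ) : ℤ⟦X⟧ :=
  mk fun n ↦ (coloredRegular k l m n : ℤ)

theorem coloredRegular_comm (k l m n : ℕ) : coloredRegular k l m n = coloredRegular k m l n := by
  simp only [coloredRegular, and_left_comm]

theorem coloredRegularSeries_mul_qProduct_pow (k l m : ℕ) :
    coloredRegularSeries k l m * qProduct {j | ¬ l ∣ j ∧ ¬ m ∣ j} ^ k = 1 := by
  have hcount : coloredRegularSeries k l m =
      weightSeries Prod.fst ({j | ¬ l ∣ j ∧ ¬ m ∣ j} ×ˢ Set.Iio k) := by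
    ext n
    simp only [coloredRegularSeries, weightSeries, coeff_mk, coloredRegular, multisetsOfWeight,
      ← Nat.card_coe_set_eq, Set.mem_prod, Set.mem_ofPred_eq, Set.mem_Iio, and_assoc,
      Set.coe_ofPred]
  rw [hcount, weightSeries_fst_mul_qProduct_pow fun h ↦ h.1 (dvd_zero l)]

theorem coloredRegularSeries_mul_eulerProduct_pow (k l m : ℕ) :
    coloredRegularSeries k l m * eulerProduct 1 ^ k =
      (regularProduct l m * eulerProduct m) ^ k := by
  rw [← regularProduct_one_mul_eulerProduct m, ← qProduct_not_dvd_mul_regularProduct l m]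
  linear_combination (regularProduct l m * eulerProduct m) ^ k *
    coloredRegularSeries_mul_qProduct_pow k l m

end GeneratingFunction

section Reduction

/-- Reduction of the coefficients modulo `p`. -/
noncomputable abbrev reduceMod (p : ℕ) : ℤ⟦X⟧ →+* (ZMod p)⟦X⟧ :=
  PowerSeries.map (Int.castRingHom (ZMod p))

theorem coeff_reduceMod_coloredRegularSeries (p k l m n : ℕ) :
    coeff n (reduceMod p (coloredRegularSeries k l m)) = coloredRegular k l m n := by
  simp only [coloredRegularSeries, coeff_map, coeff_mk, eq_intCast, Int.cast_natCast]

variable {p : ℕ} [Fact p.Prime]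

theorem expand_eq_pow (hp : p ≠ 0) (f : (ZMod p)⟦X⟧) : expand p hp f = f ^ p := by
  have h := MvPowerSeries.map_frobenius_expand (R := ZMod p) (σ := Unit) p (f := f) hp
  rwa [ZMod.frobenius_zmod, MvPowerSeries.map_id] at h

theorem reduceMod_eulerProduct_self :
    reduceMod p (eulerProduct p) = reduceMod p (eulerProduct 1) ^ p := by
  have hp : p ≠ 0 := NeZero.ne p
  rw [← expand_eq_pow hp, ← map_expand, expand_eulerProduct, mul_one]

theorem reduceMod_coloredRegularSeries (k l : ℕ) :
    reduceMod p (coloredRegularSeries k l p) =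
      reduceMod p (eulerProduct 1) ^ (k * (p - 1)) * reduceMod p (regularProduct l p) ^ k := by
  have h := congrArg (reduceMod p) (coloredRegularSeries_mul_eulerProduct_pow k l p)
  simp only [map_mul, map_pow, reduceMod_eulerProduct_self] at h
  have hp : p = p - 1 + 1 := (Nat.sub_add_cancel (Fact.out : p.Prime).one_le).symm
  refine (((isUnit_eulerProduct 1).map (reduceMod p)).pow k).mul_right_cancel ?_
  calc _ = (reduceMod p (regularProduct l p) * reduceMod p (eulerProduct 1) ^ p) ^ k := h
    _ = (reduceMod p (regularProduct l p) * reduceMod p (eulerProduct 1) ^ (p - 1 + 1)) ^ k := by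
      rw [← hp]
    _ = _ := by ring

/-- With `p` colours the generating function is a `p`-th power, hence by Frobenius a series in
`X ^ p`, modulo `p`. -/
theorem dvd_coloredRegular_of_not_dvd (l m : ℕ) {n : ℕ} (hn : ¬ p ∣ n) :
    p ∣ coloredRegular p l m n := by
  have hp : p ≠ 0 := NeZero.ne p
  have hD : IsUnit (qProduct {j | ¬ l ∣ j ∧ ¬ m ∣ j}) := isUnit_qProduct fun h ↦ h.1 (dvd_zero l)
  obtain ⟨V, hV⟩ := hD.exists_right_inv
  have hpow : coloredRegularSeries p l m = V ^ p := by
    calc coloredRegularSeries p l m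
        = coloredRegularSeries p l m * (qProduct {j | ¬ l ∣ j ∧ ¬ m ∣ j} * V) ^ p := by
          rw [hV, one_pow, mul_one]
      _ = V ^ p := by
          rw [mul_pow, ← mul_assoc, coloredRegularSeries_mul_qProduct_pow, one_mul]
  rw [← ZMod.natCast_eq_zero_iff, ← coeff_reduceMod_coloredRegularSeries, hpow, map_pow,
    ← expand_eq_pow hp, coeff_expand_of_not_dvd _ _ _ hn]

end Reduction

section ThetaSeries

variable {ι κ : Type*} {v : ι → ℕ} {w : κ → ℕ}

/-- The series `∑ i, X ^ w i`, for a weight `w` attaining each value finitely often. -/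
noncomputable def thetaSeries (w : κ → ℕ) : ℤ⟦X⟧ := ∑' i, X ^ w i

theorem hasSum_thetaSeries (hw : Tendsto w cofinite atTop) :
    HasSum (fun i ↦ (X ^ w i : ℤ⟦X⟧)) (thetaSeries w) := by
  refine ((WithPiTopology.summable_iff_summable_coeff ℤ).2 fun d ↦
    summable_of_hasFiniteSupport ?_).hasSum
  refine (eventually_cofinite.1 (hw.eventually_gt_atTop d)).subset fun i hi hd ↦ hi ?_
  exact (coeff_X_pow d (w i)).trans (if_neg hd.ne)

theorem coeff_thetaSeries_of_forall_ne (hw : Tendsto w cofinite atTop) {d : ℕ}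
    (hd : ∀ i, w i ≠ d) : coeff d (thetaSeries w) = 0 := by
  have hzero (i : κ) : coeff d (X ^ w i : ℤ⟦X⟧) = 0 := by rw [coeff_X_pow, if_neg (hd i).symm]
  have h := (WithPiTopology.hasSum_iff_hasSum_coeff ℤ).1 (hasSum_thetaSeries hw) d
  simp only [hzero] at h
  exact h.unique hasSum_zero

theorem tendsto_add_cofinite_atTop (hv : Tendsto v cofinite atTop)
    (hw : Tendsto w cofinite atTop) :
    Tendsto (fun p : ι × κ ↦ v p.1 + w p.2) cofinite atTop := by
  refine tendsto_atTop.2 fun n ↦ eventually_cofinite.2 ?_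
  refine ((eventually_cofinite.1 (hv.eventually_ge_atTop n)).prod
    (eventually_cofinite.1 (hw.eventually_ge_atTop n))).subset fun p hp ↦ ?_
  exact ⟨fun h ↦ hp (h.trans (Nat.le_add_right _ _)), fun h ↦ hp (h.trans (Nat.le_add_left _ _))⟩

theorem tendsto_mul_cofinite_atTop (hw : Tendsto w cofinite atTop) {k : ℕ} (hk : k ≠ 0) :
    Tendsto (fun i ↦ k * w i) cofinite atTop :=
  hw.const_mul_atTop' (Nat.pos_of_ne_zero hk)

theorem thetaSeries_mul (hv : Tendsto v cofinite atTop) (hw : Tendsto w cofinite atTop) :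
    thetaSeries v * thetaSeries w = thetaSeries fun p : ι × κ ↦ v p.1 + w p.2 := by
  refine (hasSum_thetaSeries hv).mul_eq (hasSum_thetaSeries hw) ?_
  simpa only [pow_add] using hasSum_thetaSeries (tendsto_add_cofinite_atTop hv hw)

theorem thetaSeries_sumElim (hv : Tendsto v cofinite atTop) (hw : Tendsto w cofinite atTop) :
    thetaSeries (Sum.elim v w) = thetaSeries v + thetaSeries w :=
  ((hasSum_thetaSeries hv).sum (f := fun i ↦ (X ^ Sum.elim v w i : ℤ⟦X⟧))
    (hasSum_thetaSeries hw)).tsum_eq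

theorem thetaSeries_comp_equiv (e : ι ≃ κ) (w : κ → ℕ) :
    thetaSeries (w ∘ e) = thetaSeries w :=
  e.tsum_eq fun i ↦ (X ^ w i : ℤ⟦X⟧)

theorem X_mul_thetaSeries (hw : Tendsto w cofinite atTop) :
    X * thetaSeries w = thetaSeries fun i ↦ w i + 1 := by
  simpa only [thetaSeries, pow_succ'] using ((hasSum_thetaSeries hw).mul_left X).tsum_eq.symm

theorem expand_thetaSeries (hw : Tendsto w cofinite atTop) {k : ℕ} (hk : k ≠ 0) :
    expand k hk (thetaSeries w) = thetaSeries fun i ↦ k * w i := by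
  have h := (hasSum_thetaSeries hw).map (expand k hk) (continuous_expand k hk)
  simpa only [thetaSeries, Function.comp_def, map_pow, expand_X, ← pow_mul] using h.tsum_eq.symm

end ThetaSeries

section PhiPsi

/-- The triangular number `a * (a + 1) / 2`, which is nonnegative for every integer `a`. -/
def triangular (a : ℤ) : ℕ := (a * (a + 1) / 2).toNat

/-- Ramanujan's theta function `φ(q) = ∑_{a ∈ ℤ} q ^ (a ^ 2)`. -/
noncomputable def phi : ℤ⟦X⟧ := thetaSeries fun a : ℤ ↦ a.natAbs ^ 2

/-- Ramanujan's theta function `ψ(q) = ∑_{n ≥ 0} q ^ (n * (n + 1) / 2)`. -/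
noncomputable def psi : ℤ⟦X⟧ := thetaSeries fun n : ℕ ↦ triangular n

theorem two_mul_triangular (a : ℤ) : 2 * (triangular a : ℤ) = a * (a + 1) := by
  have hnonneg : 0 ≤ a * (a + 1) := by
    rcases le_or_gt 0 a with ha | ha <;> nlinarith
  rw [triangular, Int.toNat_of_nonneg (Int.ediv_nonneg hnonneg two_pos.le),
    Int.mul_ediv_cancel' (Int.even_mul_succ_self a).two_dvd]

theorem tendsto_cofinite_of_abs_le {w : ℤ → ℕ} (hw : ∀ a, |a| ≤ w a + 1) :
    Tendsto w cofinite atTop := by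
  refine tendsto_atTop.2 fun n ↦ eventually_cofinite.2 ?_
  refine (Set.finite_Icc (-(n : ℤ)) n).subset fun a ha ↦ abs_le.1 ?_
  have := hw a
  rw [Set.mem_ofPred_eq] at ha
  lia

theorem tendsto_natAbs_sq : Tendsto (fun a : ℤ ↦ a.natAbs ^ 2) cofinite atTop := by
  refine tendsto_cofinite_of_abs_le fun a ↦ abs_le.2 ?_
  push_cast [sq_abs]
  constructor <;> nlinarith

theorem tendsto_triangular : Tendsto triangular cofinite atTop := by
  refine tendsto_cofinite_of_abs_le fun a ↦ abs_le.2 ?_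
  have := two_mul_triangular a
  rcases lt_or_ge a 0 with ha | ha
  · rcases eq_or_ne a (-1) with rfl | ha'
    · lia
    · have : a ≤ -2 := by lia
      constructor <;> nlinarith
  · constructor <;> nlinarith [sq_nonneg (a - 1)]

theorem tendsto_triangular_natCast : Tendsto (fun n : ℕ ↦ triangular n) cofinite atTop :=
  tendsto_triangular.comp Nat.cast_injective.tendsto_cofinite

theorem thetaSeries_triangular : thetaSeries triangular = 2 * psi := by
  have hsymm (n : ℕ) : triangular (Int.negSucc n) = triangular n := by
    have hneg := two_mul_triangular (Int.negSucc n)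
    have hn := two_mul_triangular n
    rw [Int.negSucc_eq] at hneg ⊢
    lia
  have hsplit : triangular ∘ Equiv.intEquivNatSumNat.symm =
      Sum.elim (fun n : ℕ ↦ triangular n) fun n : ℕ ↦ triangular n := by
    ext1 (n | n)
    exacts [rfl, hsymm n]
  rw [← thetaSeries_comp_equiv Equiv.intEquivNatSumNat.symm, hsplit,
    thetaSeries_sumElim tendsto_triangular_natCast tendsto_triangular_natCast, two_mul, psi]

theorem bijective_add_sub : Function.Bijective (Sum.elim
    (fun p : ℤ × ℤ ↦ (p.1 + p.2, p.1 - p.2)) fun p : ℤ × ℤ ↦ (p.1 + p.2 + 1, p.1 - p.2)) := by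
  constructor
  · rintro (⟨a, b⟩ | ⟨a, b⟩) (⟨c, d⟩ | ⟨c, d⟩) h <;>
      simp only [Sum.elim_inl, Sum.elim_inr, Prod.mk.injEq, Sum.inl.injEq, Sum.inr.injEq,
        reduceCtorEq] at h ⊢ <;> lia
  · rintro ⟨x, y⟩
    rcases Int.even_or_odd' (x + y) with ⟨c, hc | hc⟩
    · exact ⟨Sum.inl (c, x - c), by simp only [Sum.elim_inl, Prod.mk.injEq]; lia⟩
    · exact ⟨Sum.inr (c, x - c - 1), by simp only [Sum.elim_inr, Prod.mk.injEq]; lia⟩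

theorem thetaSeries_parity {w : ℤ × ℤ → ℕ} (hw : Tendsto w cofinite atTop) :
    thetaSeries w = (thetaSeries fun p : ℤ × ℤ ↦ w (p.1 + p.2, p.1 - p.2)) +
      thetaSeries fun p : ℤ × ℤ ↦ w (p.1 + p.2 + 1, p.1 - p.2) := by
  let e := Equiv.ofBijective _ bijective_add_sub
  have he := hw.comp e.injective.tendsto_cofinite
  have hsplit : w ∘ e = Sum.elim ((w ∘ e) ∘ Sum.inl) ((w ∘ e) ∘ Sum.inr) :=
    (Sum.elim_comp_inl_inr _).symm
  rw [← thetaSeries_comp_equiv e, hsplit,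
    thetaSeries_sumElim (he.comp Sum.inl_injective.tendsto_cofinite)
      (he.comp Sum.inr_injective.tendsto_cofinite)]
  rfl

theorem phi_sq :
    phi ^ 2 = expand 2 two_ne_zero phi ^ 2 + 4 * X * expand 4 four_ne_zero psi ^ 2 := by
  have hsq := tendsto_natAbs_sq
  have htri := tendsto_triangular
  have hsq2 := tendsto_mul_cofinite_atTop hsq two_ne_zero
  have htri4 := tendsto_mul_cofinite_atTop htri four_ne_zero
  have heven (p : ℤ × ℤ) : (p.1 + p.2).natAbs ^ 2 + (p.1 - p.2).natAbs ^ 2 =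
      2 * p.1.natAbs ^ 2 + 2 * p.2.natAbs ^ 2 := by
    zify
    simp only [sq_abs]
    ring
  have hodd (p : ℤ × ℤ) : (p.1 + p.2 + 1).natAbs ^ 2 + (p.1 - p.2).natAbs ^ 2 =
      4 * triangular p.1 + 4 * triangular p.2 + 1 := by
    zify
    simp only [sq_abs]
    linear_combination -2 * two_mul_triangular p.1 - 2 * two_mul_triangular p.2
  have hPsi : 4 * X * expand 4 four_ne_zero psi ^ 2 =
      X * expand 4 four_ne_zero (thetaSeries triangular) ^ 2 := by
    rw [thetaSeries_triangular, map_mul, map_ofNat]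
    ring
  rw [hPsi, phi, expand_thetaSeries hsq, expand_thetaSeries htri, sq, sq, sq,
    thetaSeries_mul hsq hsq, thetaSeries_mul hsq2 hsq2, thetaSeries_mul htri4 htri4,
    X_mul_thetaSeries (tendsto_add_cofinite_atTop htri4 htri4),
    thetaSeries_parity (tendsto_add_cofinite_atTop hsq hsq)]
  simp only [heven, hodd]

theorem psi_sq : psi ^ 2 = phi * expand 2 two_ne_zero psi := by
  have hsq := tendsto_natAbs_sq
  have htri := tendsto_triangular
  have htri2 := tendsto_mul_cofinite_atTop htri two_ne_zero
  have hsq' : Tendsto (fun a : ℤ ↦ (a + 1).natAbs ^ 2) cofinite atTop :=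
    hsq.comp (Equiv.addRight (1 : ℤ)).injective.tendsto_cofinite
  have heven (p : ℤ × ℤ) : triangular (p.1 + p.2) + triangular (p.1 - p.2) =
      2 * triangular p.1 + p.2.natAbs ^ 2 := by
    have h₁ := two_mul_triangular (p.1 + p.2)
    have h₂ := two_mul_triangular (p.1 - p.2)
    zify
    rw [sq_abs]
    linarith [two_mul_triangular p.1]
  have hodd (p : ℤ × ℤ) : triangular (p.1 + p.2 + 1) + triangular (p.1 - p.2) =
      (p.1 + 1).natAbs ^ 2 + 2 * triangular p.2 := by
    have h₁ := two_mul_triangular (p.1 + p.2 + 1)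
    have h₂ := two_mul_triangular (p.1 - p.2)
    zify
    rw [sq_abs]
    linarith [two_mul_triangular p.2]
  have hshift : phi = thetaSeries fun a : ℤ ↦ (a + 1).natAbs ^ 2 :=
    (thetaSeries_comp_equiv (Equiv.addRight (1 : ℤ)) _).symm
  have hPsi : thetaSeries triangular ^ 2 =
      expand 2 two_ne_zero (thetaSeries triangular) * phi +
        phi * expand 2 two_ne_zero (thetaSeries triangular) := by
    nth_rw 2 [hshift]
    rw [phi, expand_thetaSeries htri, sq, thetaSeries_mul htri htri, thetaSeries_mul htri2 hsq,
      thetaSeries_mul hsq' htri2, thetaSeries_parity (tendsto_add_cofinite_atTop htri htri)]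
    simp only [heven, hodd]
  rw [thetaSeries_triangular, map_mul, map_ofNat] at hPsi
  have hfour : (4 : ℤ⟦X⟧) ≠ 0 := by
    simpa only [map_ofNat] using (map_ne_zero_iff (C (R := ℤ)) C_injective).2 four_ne_zero
  refine mul_left_cancel₀ hfour ?_
  linear_combination hPsi

end PhiPsi

section Gauss

section Shanks

variable {R : Type*} [CommRing R] (q : R)

/-- The product `∏_{i < s} (1 - q ^ (2 i + 1)) ∏_{s ≤ i < n} (1 - q ^ (2 i + 2))` appearing in
Shanks's finite form of Gauss's identity for `ψ`. -/
def shanksProduct (s n : ℕ) : R :=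
  (∏ i ∈ Finset.range s, (1 - q ^ (2 * i + 1))) * ∏ i ∈ Finset.Ico s n, (1 - q ^ (2 * i + 2))

theorem shanksProduct_self (n : ℕ) :
    shanksProduct q n n = ∏ i ∈ Finset.range n, (1 - q ^ (2 * i + 1)) := by
  rw [shanksProduct, Finset.Ico_self, Finset.prod_empty, mul_one]

theorem shanksProduct_zero (n : ℕ) :
    shanksProduct q 0 n = ∏ i ∈ Finset.range n, (1 - q ^ (2 * i + 2)) := by
  rw [shanksProduct, Finset.prod_range_zero, one_mul, Nat.Ico_zero_eq_range]

theorem shanksProduct_succ_right {s n : ℕ} (h : s ≤ n) :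
    shanksProduct q s (n + 1) = shanksProduct q s n * (1 - q ^ (2 * n + 2)) := by
  rw [shanksProduct, shanksProduct, Finset.prod_Ico_succ_top h, mul_assoc]

theorem shanksProduct_mul_odd_factor {s n : ℕ} (h : s < n) :
    shanksProduct q s n * (1 - q ^ (2 * s + 1)) =
      shanksProduct q (s + 1) n * (1 - q ^ (2 * s + 2)) := by
  rw [shanksProduct, shanksProduct, Finset.prod_range_succ, Finset.prod_eq_prod_Ico_succ_bot h]
  ring

theorem sum_shanksProduct_telescope {m n : ℕ} (h : m ≤ n) :
    ∑ s ∈ Finset.range (m + 1), (shanksProduct q s (n + 1) * q ^ (s * (2 * n + 3)) -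
        (1 - q ^ (2 * n + 1)) * (shanksProduct q s n * q ^ (s * (2 * n + 1)))) =
      shanksProduct q m n * (1 - q ^ (2 * m + 1)) * q ^ ((m + 1) * (2 * n + 1)) := by
  induction m with
  | zero =>
    rw [Finset.sum_range_one, shanksProduct_succ_right q h]
    ring
  | succ m ih =>
    rw [Finset.sum_range_succ, ih (m.le_succ.trans h), shanksProduct_succ_right q h,
      shanksProduct_mul_odd_factor q h]
    ring

theorem triangular_two_mul_add_one (n : ℕ) :
    triangular (2 * n + 1 : ℕ) = (n + 1) * (2 * n + 1) := by
  zify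
  have h := two_mul_triangular (2 * n + 1 : ℕ)
  push_cast at h ⊢
  linarith

theorem triangular_two_mul_add_two (n : ℕ) :
    triangular (2 * n + 2 : ℕ) = (n + 1) * (2 * n + 3) := by
  zify
  have h := two_mul_triangular (2 * n + 2 : ℕ)
  push_cast at h ⊢
  linarith

theorem shanks_identity (n : ℕ) :
    (∑ s ∈ Finset.range (2 * n + 1), q ^ triangular s) *
        ∏ i ∈ Finset.range n, (1 - q ^ (2 * i + 1)) =
      ∑ s ∈ Finset.range (n + 1), shanksProduct q s n * q ^ (s * (2 * n + 1)) := by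
  induction n with
  | zero => simp [shanksProduct, triangular]
  | succ n ih =>
    have htelescope := sum_shanksProduct_telescope q (le_refl n)
    rw [Finset.sum_sub_distrib, ← Finset.mul_sum, ← ih, shanksProduct_self,
      ← triangular_two_mul_add_one] at htelescope
    rw [show 2 * (n + 1) + 1 = 2 * n + 3 by ring, Finset.sum_range_succ _ (n + 1),
      shanksProduct_self, ← triangular_two_mul_add_two, Finset.sum_range_succ,
      Finset.sum_range_succ, Finset.prod_range_succ]
    linear_combination -htelescope

end Shanks

theorem tendsto_X_pow_mul_zero {R : Type*} [CommSemiring R] [TopologicalSpace R] {u : ℕ → ℕ}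
    (hu : Tendsto u atTop atTop) (f : ℕ → R⟦X⟧) :
    Tendsto (fun N ↦ X ^ u N * f N) atTop (𝓝 0) := by
  rw [WithPiTopology.tendsto_iff_coeff_tendsto]
  intro d
  refine tendsto_const_nhds.congr' ?_
  filter_upwards [hu.eventually_gt_atTop d] with N hN
  rw [coeff_X_pow_mul', if_neg hN.not_ge, map_zero]

theorem tendsto_prod_odd_factors :
    Tendsto (fun N ↦ ∏ i ∈ Finset.range N, (1 - X ^ (2 * i + 1) : ℤ⟦X⟧)) atTop
      (𝓝 (regularProduct 1 2)) := by
  have hrange : Set.range (fun i ↦ 2 * i + 1) = {j | 1 ∣ j ∧ ¬ 2 ∣ j} := by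
    ext j
    simp only [Set.mem_range, Set.mem_ofPred_eq, one_dvd, true_and]
    exact ⟨by rintro ⟨i, rfl⟩; lia, fun hj ↦ ⟨j / 2, by lia⟩⟩
  rw [regularProduct, ← hrange]
  exact tendsto_prod_range_comp fun i j h ↦ by simpa using h

theorem tendsto_prod_even_factors :
    Tendsto (fun N ↦ ∏ i ∈ Finset.range N, (1 - X ^ (2 * i + 2) : ℤ⟦X⟧)) atTop
      (𝓝 (eulerProduct 2)) := by
  have hrange : Set.range (fun i ↦ 2 * i + 2) = {j | j ≠ 0 ∧ 2 ∣ j} := by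
    ext j
    simp only [Set.mem_range, Set.mem_ofPred_eq]
    exact ⟨by rintro ⟨i, rfl⟩; lia, fun hj ↦ ⟨j / 2 - 1, by lia⟩⟩
  rw [eulerProduct, ← hrange]
  exact tendsto_prod_range_comp fun i j h ↦ by simpa using h

theorem psi_mul_regularProduct : psi * regularProduct 1 2 = eulerProduct 2 := by
  have hodd : Tendsto (fun N : ℕ ↦ 2 * N + 1) atTop atTop :=
    (strictMono_nat_of_lt_succ fun N ↦ by lia).tendsto_atTop
  have hpsi := (hasSum_thetaSeries tendsto_triangular_natCast).tendsto_sum_nat.comp hodd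
  have hleft := hpsi.mul tendsto_prod_odd_factors
  have hright := tendsto_prod_even_factors.add (tendsto_X_pow_mul_zero hodd fun N ↦
    ∑ s ∈ Finset.range N, shanksProduct X (s + 1) N * X ^ (s * (2 * N + 1)))
  rw [add_zero] at hright
  refine tendsto_nhds_unique hleft (hright.congr fun N ↦ ?_)
  rw [Function.comp_apply, shanks_identity, Finset.sum_range_succ', shanksProduct_zero,
    Finset.mul_sum, zero_mul, pow_zero, mul_one, add_comm]
  congr 1
  exact Finset.sum_congr rfl fun s _ ↦ by ring

theorem psi_mul_eulerProduct : psi * eulerProduct 1 = eulerProduct 2 ^ 2 := by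
  rw [← regularProduct_one_mul_eulerProduct 2, ← mul_assoc, psi_mul_regularProduct, sq]

end Gauss

section Dissection

theorem rescale_neg_one_eulerProduct {k : ℕ} (hk : Even k) :
    rescale (-1) (eulerProduct k) = eulerProduct k := by
  obtain ⟨c, rfl⟩ := hk.two_dvd
  rw [← expand_eulerProduct two_ne_zero, rescale_neg_one_expand two_ne_zero even_two]

theorem rescale_neg_one_regularProduct_mul_self (l : ℕ) :
    rescale (-1) (regularProduct l 2) * regularProduct l 2 =
      expand 2 two_ne_zero (regularProduct l 2) :=
  rescale_neg_one_qProduct_mul_self fun _ ha ↦ Nat.not_even_iff_odd.1 fun h ↦ ha.2 h.two_dvd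

theorem phi_mul_regularProduct_sq :
    phi * regularProduct 1 2 ^ 2 =
      eulerProduct 2 * expand 2 two_ne_zero (regularProduct 1 2) ^ 2 := by
  have hpsi := congrArg (expand 2 two_ne_zero) psi_mul_regularProduct
  have hodd := congrArg (expand 2 two_ne_zero) (regularProduct_one_mul_eulerProduct 2)
  simp only [map_mul, expand_eulerProduct] at hpsi hodd
  refine (isUnit_eulerProduct (2 * 2)).mul_right_cancel ?_
  set O := regularProduct 1 2
  set O₂ := expand 2 two_ne_zero O
  calc phi * O ^ 2 * eulerProduct (2 * 2)
      = (psi * O) ^ 2 * O₂ := by rw [← hpsi, mul_pow, psi_sq]; ring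
    _ = eulerProduct 2 * eulerProduct (2 * 1) * O₂ := by rw [psi_mul_regularProduct]; ring
    _ = eulerProduct 2 * O₂ ^ 2 * eulerProduct (2 * 2) := by rw [← hodd]; ring

theorem rescale_neg_one_phi_mul_eulerProduct :
    rescale (-1) phi * eulerProduct 2 = eulerProduct 1 ^ 2 := by
  have h := congrArg (rescale (-1)) phi_mul_regularProduct_sq
  simp only [map_mul, map_pow, rescale_neg_one_eulerProduct even_two,
    rescale_neg_one_expand two_ne_zero even_two] at h
  have hphi : rescale (-1) phi = eulerProduct 2 * regularProduct 1 2 ^ 2 := by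
    refine (((isUnit_regularProduct 1 2).map (rescale (-1))).pow 2).mul_right_cancel ?_
    rw [h, ← rescale_neg_one_regularProduct_mul_self]
    ring
  rw [hphi, ← regularProduct_one_mul_eulerProduct 2]
  ring

theorem phi_pow_four_sub :
    phi ^ 4 - rescale (-1) phi ^ 4 = 16 * X * expand 2 two_ne_zero psi ^ 4 := by
  have hneg := congrArg (rescale (-1)) phi_sq
  simp only [map_add, map_mul, map_pow, map_ofNat, rescale_neg_one_X,
    rescale_neg_one_expand two_ne_zero even_two,
    rescale_neg_one_expand four_ne_zero (by decide : Even 4)] at hneg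
  have hpsi : expand 2 two_ne_zero psi ^ 2 =
      expand 2 two_ne_zero phi * expand 4 four_ne_zero psi := by
    rw [← map_pow, psi_sq, map_mul, ← expand_mul]
  calc phi ^ 4 - rescale (-1) phi ^ 4
      = (phi ^ 2 + rescale (-1) phi ^ 2) * (phi ^ 2 - rescale (-1) phi ^ 2) := by ring
    _ = 16 * X * (expand 2 two_ne_zero phi * expand 4 four_ne_zero psi) ^ 2 := by
        rw [hneg, phi_sq]; ring
    _ = 16 * X * expand 2 two_ne_zero psi ^ 4 := by rw [← hpsi]; ring

theorem eulerProduct_one_pow_eight_sub :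
    eulerProduct 1 ^ 8 - rescale (-1) (eulerProduct 1 ^ 8) = -16 * X * eulerProduct 4 ^ 8 := by
  have hphi := rescale_neg_one_phi_mul_eulerProduct
  have hphi' := congrArg (rescale (-1)) hphi
  have hpsi := congrArg (expand 2 two_ne_zero) psi_mul_eulerProduct
  simp only [map_mul, map_pow, rescale_rescale, neg_mul_neg, mul_one, rescale_one,
    RingHom.id_apply, rescale_neg_one_eulerProduct even_two, expand_eulerProduct,
    Nat.reduceMul] at hphi' hpsi
  calc eulerProduct 1 ^ 8 - rescale (-1) (eulerProduct 1 ^ 8)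
      = (eulerProduct 1 ^ 2) ^ 4 - (rescale (-1) (eulerProduct 1) ^ 2) ^ 4 := by
        rw [map_pow]; ring
    _ = -(phi ^ 4 - rescale (-1) phi ^ 4) * eulerProduct 2 ^ 4 := by
        rw [← hphi, ← hphi']; ring
    _ = -16 * X * (expand 2 two_ne_zero psi * eulerProduct 2) ^ 4 := by
        rw [phi_pow_four_sub]; ring
    _ = -16 * X * eulerProduct 4 ^ 8 := by rw [hpsi]; ring

theorem coeff_four_mul_add_one_eulerProduct_pow_eight_mul_expand (V : ℤ⟦X⟧) (n : ℕ) :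
    coeff (4 * n + 1) (eulerProduct 1 ^ 8 * expand 4 four_ne_zero V) =
      -8 * coeff n (eulerProduct 1 ^ 8 * V) := by
  set F := eulerProduct 1 ^ 8 * expand 4 four_ne_zero V with hF
  have hodd : Odd (4 * n + 1) := ⟨2 * n, by ring⟩
  have hneg : coeff (4 * n + 1) (rescale (-1) F) = -coeff (4 * n + 1) F := by
    rw [coeff_rescale, hodd.neg_one_pow, neg_one_mul]
  have hsub : F - rescale (-1) F =
      C (-16) * (X * expand 4 four_ne_zero (eulerProduct 1 ^ 8 * V)) := by
    rw [hF, map_mul, rescale_neg_one_expand four_ne_zero (by decide), ← sub_mul,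
      eulerProduct_one_pow_eight_sub, map_mul, map_pow, expand_eulerProduct]
    simp only [map_neg, map_ofNat]
    ring
  have hcoeff := congrArg (coeff (4 * n + 1)) hsub
  rw [map_sub, hneg, coeff_C_mul, coeff_succ_X_mul, coeff_expand_mul] at hcoeff
  linarith

theorem triangular_mod_three_ne_two (a : ℤ) : triangular a % 3 ≠ 2 := by
  have h : (2 * triangular a : ZMod 3) = a * (a + 1) := mod_cast
    congrArg (Int.cast : ℤ → ZMod 3) (two_mul_triangular a)
  have hne : ∀ x : ZMod 3, 2 * 2 ≠ x * (x + 1) := by decide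
  intro ha
  have ha' : (triangular a : ZMod 3) = (2 : ℕ) := (ZMod.natCast_eq_natCast_iff _ _ _).2 ha
  rw [ha', Nat.cast_ofNat] at h
  exact hne a h

theorem coeff_three_mul_add_two_psi_mul_expand (V : ℤ⟦X⟧) (n : ℕ) :
    coeff (3 * n + 2) (psi * expand 3 three_ne_zero V) = 0 := by
  rw [coeff_mul]
  refine Finset.sum_eq_zero fun ⟨i, j⟩ hij ↦ ?_
  rw [Finset.HasAntidiagonal.mem_antidiagonal] at hij
  by_cases hj : 3 ∣ j
  · have hi : coeff i psi = 0 :=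
      coeff_thetaSeries_of_forall_ne tendsto_triangular_natCast fun a ha ↦
        triangular_mod_three_ne_two a (by lia)
    rw [hi, zero_mul]
  · rw [coeff_expand_of_not_dvd _ _ _ hj, mul_zero]

end Dissection

section Congruences

theorem reduceMod_two_psi : reduceMod 2 psi = reduceMod 2 (eulerProduct 1) ^ 3 := by
  have h := congrArg (reduceMod 2) psi_mul_eulerProduct
  rw [map_mul, map_pow, reduceMod_eulerProduct_self] at h
  refine ((isUnit_eulerProduct 1).map (reduceMod 2)).mul_right_cancel ?_
  linear_combination h

theorem two_dvd_coloredRegular_three (t n : ℕ) :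
    2 ∣ coloredRegular 3 2 (3 * t) (3 * n + 2) := by
  have hseries : reduceMod 2 (coloredRegularSeries 3 (3 * t) 2) =
      reduceMod 2 (psi * expand 3 three_ne_zero (regularProduct t 2 ^ 3)) := by
    rw [reduceMod_coloredRegularSeries, map_mul, reduceMod_two_psi, map_pow (expand _ _),
      expand_regularProduct three_ne_zero (by decide), map_pow]
  rw [← ZMod.natCast_eq_zero_iff, coloredRegular_comm, ← coeff_reduceMod_coloredRegularSeries,
    hseries, coeff_map, coeff_three_mul_add_two_psi_mul_expand, map_zero]

theorem natCast_coloredRegular_four_mul {p k : ℕ} [Fact p.Prime] (hp : Nat.Coprime 4 p)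
    (hk : k * (p - 1) = 8) (l n : ℕ) :
    (coloredRegular k (4 * l) p (4 * n + 1) : ZMod p) = -8 * coloredRegular k l p n := by
  let V := regularProduct l p ^ k
  have hseries : reduceMod p (coloredRegularSeries k l p) =
      reduceMod p (eulerProduct 1 ^ 8 * V) := by
    rw [reduceMod_coloredRegularSeries, hk, map_mul, map_pow, map_pow]
  have hseries_four : reduceMod p (coloredRegularSeries k (4 * l) p) =
      reduceMod p (eulerProduct 1 ^ 8 * expand 4 four_ne_zero V) := by
    rw [reduceMod_coloredRegularSeries, hk, map_pow (expand _ _),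
      expand_regularProduct four_ne_zero hp, map_mul, map_pow, map_pow]
  rw [← coeff_reduceMod_coloredRegularSeries, ← coeff_reduceMod_coloredRegularSeries,
    hseries_four, hseries, coeff_map, coeff_map,
    coeff_four_mul_add_one_eulerProduct_pow_eight_mul_expand]
  simp only [map_mul, map_neg, map_ofNat]

end Congruences

end ColoredPartition

open ColoredPartition in
theorem stmt_19_general :
    (∀ l n : ℕ, coloredRegular 2 (4 * l) 5 (4 * n + 1) ≡ 2 * coloredRegular 2 l 5 n [MOD 10]) ∧
    ∀ t n : ℕ, coloredRegular 3 2 (3 * t) (3 * n + 2) ≡ 0 [MOD 6] := by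
  refine ⟨fun l n ↦ ?_, fun t n ↦ ?_⟩
  · have : Fact (Nat.Prime 5) := ⟨Nat.prime_five⟩
    have htwo : coloredRegular 2 (4 * l) 5 (4 * n + 1) ≡ 2 * coloredRegular 2 l 5 n [MOD 2] :=
      ((dvd_coloredRegular_of_not_dvd _ _ (by lia)).modEq_zero_nat).trans
        (dvd_mul_right 2 _).modEq_zero_nat.symm
    have hneg_eight : (-8 : ZMod 5) = 2 := rfl
    have hfive : coloredRegular 2 (4 * l) 5 (4 * n + 1) ≡ 2 * coloredRegular 2 l 5 n [MOD 5] := by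
      rw [← ZMod.natCast_eq_natCast_iff, natCast_coloredRegular_four_mul (by decide) rfl,
        Nat.cast_mul, Nat.cast_ofNat, hneg_eight]
    exact (Nat.modEq_and_modEq_iff_modEq_mul (by decide : Nat.Coprime 2 5)).1 ⟨htwo, hfive⟩
  · have hthree : 3 ∣ coloredRegular 3 2 (3 * t) (3 * n + 2) :=
      dvd_coloredRegular_of_not_dvd _ _ (by lia)
    exact (Nat.Coprime.mul_dvd_of_dvd_of_dvd (by decide : Nat.Coprime 2 3)
      (two_dvd_coloredRegular_three t n) hthree).modEq_zero_nat

theorem stmt_19 :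
    (∀ n : ℕ, coloredRegular 2 8 5 (4 * n + 1) ≡ 2 * coloredRegular 2 2 5 n [MOD 10]) ∧
    (∀ t : ℕ, 0 < t → Odd t → ∀ n : ℕ,
      coloredRegular 3 2 (3 * t) (3 * n + 2) ≡ 0 [MOD 6]) :=
  ⟨fun n ↦ stmt_19_general.1 2 n, fun t _ _ n ↦ stmt_19_general.2 t n⟩
end
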